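/- Let Π ⊆ ℝ² be a convex hexagon and let N ≥ 1 and C : Fin N → ℝ² be a finite sequence of centers such that Π ⊆ ⋃ᵢ closedBall(C i, 1), such that 0 < dist(C (i+1), C i) ≤ 1 for every i with i+1 < N, and such that for every i with 1 ≤ i ≤ N−2 the undirected Euclidean angle ∠ C(i−1) C(i) C(i+1) is at least 2π/3. Then volume(Π) ≤ N·(1 + √3/2) + 2π. -/

import Mathlib

open Metric MeasureTheory Real
open scoped ENNReal

noncomputable section

/-- The Euclidean plane. -/
abbrev Pt := EuclideanSpace ℝ (Fin 2)

/-- A convex hexagon: a compact convex subset of the plane with nonempty interior having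
exactly 6 extreme points. -/
def IsConvexHexagon (s : Set Pt) : Prop :=
  IsCompact s ∧ Convex ℝ s ∧ (interior s).Nonempty ∧ (Set.extremePoints ℝ s).ncard = 6

/-!
Cut the hexagon into its Voronoi cells with respect to the centers; each cell lies in the unit disk
around its center. Where the sequence passes through a center, the bisectors with the two neighbours
truncate that disk by two chords at distance at most `1 / 2`, whose normals enclose an angle of at
least `2π / 3`.

*Area of a cell.* Give the angles around the center a potential that grows with slope `√3 / 4`, the
slope of the tangent line of `sin / 2` at `π / 6`, drops by a fixed amount at each chord, and is
affine along the chords. The triangle over two consecutive vertices of the cell has area at most the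
increment of the potential plus the intercept `c` of that tangent line: the area is bilinear in the
two vertices, so it suffices to compare at the endpoints of chords, where concavity of `sin` on
`[0, π]` applies. Going once around the center, a cell with `k` vertices has area at most
`c * k` plus a constant, which is `1 + √3 / 2 + c * (k - 6)`.

*Number of vertices.* In the average a cell of a hexagon has at most six vertices. Fix a generic
height function. A cell has at most two vertices that are not intermediate in height. A point is
intermediate for at most one cell on its left and one on its right, and for only one cell if it lies
on the boundary, while it is a vertex of at least three cells if it is interior, and of at least two
if it is a boundary point other than a vertex of the hexagon. Summing over all points bounds the
number of vertices without the planarity of the cell complex.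

The two ends of the sequence are paid for by the area `π` of their disks.
-/

/-! ### The tangent line of `sin / 2` at `π / 6` -/

lemma le_tangent_of_concaveOn {S : Set ℝ} {f : ℝ → ℝ} {f' x y : ℝ} (hf : ConcaveOn ℝ S f)
    (hx : x ∈ S) (hy : y ∈ S) (hf' : HasDerivAt f f' x) : f y ≤ f x + f' * (y - x) := by
  rcases lt_trichotomy x y with hxy | rfl | hxy
  · have := hf.slope_le_of_hasDerivAt hx hy hxy hf'
    rw [slope_def_field, div_le_iff₀ (sub_pos.2 hxy)] at this
    linarith
  · simp
  · have := hf.le_slope_of_hasDerivAt hy hx hxy hf'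
    rw [slope_def_field, le_div_iff₀ (sub_pos.2 hxy)] at this
    linarith

/-- The slope of the tangent line of `sin / 2` at `π / 6`; the area of a triangle with apex angle
`d` between two unit legs is `sin d / 2`. -/
def tangentSlope : ℝ := √3 / 4

/-- The intercept of the tangent line of `sin / 2` at `π / 6`. -/
def tangentIntercept : ℝ := 1 / 4 - √3 * π / 24

/-- The amount by which a chord subtending the angle `2 * π / 3` lowers the tangent line bound: the
triangle over the chord has area `tangentSlope`. -/
def chordGain : ℝ := tangentIntercept + tangentSlope * (2 * π / 3) - tangentSlope

lemma sqrt_three_mem_Ioo : √3 ∈ Set.Ioo (1.732 : ℝ) 1.7321 :=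
  ⟨Real.lt_sqrt_of_sq_lt (by norm_num), (Real.sqrt_lt' (by norm_num)).2 (by norm_num)⟩

lemma tangentIntercept_mem_Ioo : tangentIntercept ∈ Set.Ioo (0.023 : ℝ) 0.024 := by
  obtain ⟨hlo, hhi⟩ := sqrt_three_mem_Ioo
  constructor <;> unfold tangentIntercept <;> nlinarith [pi_lt_d4, pi_gt_d4]

lemma tangentIntercept_nonneg : 0 ≤ tangentIntercept := by
  linarith [tangentIntercept_mem_Ioo.1]

lemma tangentSlope_mem_Ioo : tangentSlope ∈ Set.Ioo (0.433 : ℝ) 0.434 := by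
  obtain ⟨hlo, hhi⟩ := sqrt_three_mem_Ioo
  constructor <;> unfold tangentSlope <;> linarith

lemma sin_two_pi_div_three : sin (2 * π / 3) = √3 / 2 := by
  rw [show 2 * π / 3 = π - π / 3 by ring, sin_pi_sub, sin_pi_div_three]

lemma cos_two_pi_div_three : cos (2 * π / 3) = -(1 / 2) := by
  rw [show 2 * π / 3 = π - π / 3 by ring, cos_pi_sub, cos_pi_div_three]

lemma six_mul_tangentIntercept_add :
    6 * tangentIntercept + (tangentSlope * (2 * π) - 2 * chordGain) = 1 + √3 / 2 := by
  unfold chordGain tangentIntercept tangentSlope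
  ring

lemma half_sin_le_tangent {d : ℝ} (hd : 0 ≤ d) :
    sin d / 2 ≤ tangentIntercept + tangentSlope * d := by
  rcases le_total d π with hdπ | hπd
  · have hmem : π / 6 ∈ Set.Icc 0 π := ⟨by positivity, by linarith [pi_pos]⟩
    have := le_tangent_of_concaveOn strictConcaveOn_sin_Icc.concaveOn hmem ⟨hd, hdπ⟩
      (hasDerivAt_sin _)
    rw [sin_pi_div_six, cos_pi_div_six] at this
    unfold tangentIntercept tangentSlope
    linarith
  · nlinarith [sin_le_one d, pi_gt_three, tangentIntercept_mem_Ioo.1,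
      tangentSlope_mem_Ioo.1]

lemma half_sin_le_tangent_sub_chordGain {d : ℝ} (hd : 2 * π / 3 ≤ d) :
    sin d / 2 ≤ tangentIntercept + tangentSlope * d - chordGain := by
  rcases le_total d π with hdπ | hπd
  · have hmem : 2 * π / 3 ∈ Set.Icc 0 π := ⟨by positivity, by linarith [pi_pos]⟩
    have := le_tangent_of_concaveOn strictConcaveOn_sin_Icc.concaveOn hmem
      ⟨hmem.1.trans hd, hdπ⟩ (hasDerivAt_sin _)
    rw [sin_two_pi_div_three, cos_two_pi_div_three] at this
    unfold chordGain tangentSlope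
    nlinarith [mul_nonneg (sqrt_nonneg 3) (sub_nonneg.2 hd)]
  · unfold chordGain
    nlinarith [sin_le_one d, pi_gt_three, tangentSlope_mem_Ioo.1]

lemma half_sin_le_of_chords {d : ℝ} {s : ℕ} (hd : 2 * π / 3 * s ≤ d) :
    sin d / 2 ≤ tangentIntercept + tangentSlope * d - chordGain * s := by
  match s with
  | 0 => simpa using half_sin_le_tangent (by simpa using hd)
  | 1 => simpa using half_sin_le_tangent_sub_chordGain (by simpa using hd)
  | s + 2 =>
    have hs : (2 : ℝ) ≤ (s + 2 : ℕ) := by push_cast; linarith [s.cast_nonneg (α := ℝ)]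
    obtain ⟨hc, hc'⟩ := tangentIntercept_mem_Ioo
    have hl := tangentSlope_mem_Ioo.1
    unfold chordGain
    nlinarith [sin_le_one d, mul_le_mul_of_nonneg_left hd (by linarith : 0 ≤ tangentSlope)]

/-! ### Extreme points -/

section ExtremePoints

open Filter Topology Pointwise

variable {E : Type*} [AddCommGroup E] [Module ℝ E] {s t : Set E} {x u : E}

lemma eq_zero_of_mem_extremePoints (hx : x ∈ s.extremePoints ℝ) (hadd : x + u ∈ s)
    (hsub : x - u ∈ s) : u = 0 := by
  have hseg : x ∈ openSegment ℝ (x + u) (x - u) :=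
    ⟨1 / 2, 1 / 2, by norm_num, by norm_num, by norm_num, by module⟩
  simpa using hx.2 hadd hsub hseg

lemma mem_extremePoints_of_forall_add_sub (hs : Convex ℝ s) (hx : x ∈ s)
    (h : ∀ u, x + u ∈ s → x - u ∈ s → u = 0) : x ∈ s.extremePoints ℝ := by
  refine ⟨hx, fun y hy z hz ⟨a, b, ha, hb, hab, hxyz⟩ ↦ ?_⟩
  have hδ : 0 < min a b := lt_min ha hb
  have hu : min a b • (z - y) = 0 := by
    apply h
    · have := hs hy hz (sub_nonneg.2 (min_le_left a b)) (add_pos hb hδ).le (by linarith)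
      convert this using 1
      rw [← hxyz]
      module
    · have := hs hy hz (add_pos ha hδ).le (sub_nonneg.2 (min_le_right a b)) (by linarith)
      convert this using 1
      rw [← hxyz]
      module
  have hzy : z = y := sub_eq_zero.1 ((smul_eq_zero_iff_right hδ.ne').1 hu)
  rw [← hxyz, hzy, Convex.combo_self hab]

lemma finite_of_subset_extremePoints_of_collinear (ht : t ⊆ s.extremePoints ℝ)
    (hline : Collinear ℝ t) : t.Finite := by
  classical
  by_contra hinf
  obtain ⟨_, hsub, hcard⟩ := Set.Infinite.exists_subset_card_eq hinf 3
  obtain ⟨x, y, z, hxy, hxz, hyz, rfl⟩ := Finset.card_eq_three.1 hcard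
  have hext {w : E} (hw : w ∈ ({x, y, z} : Finset E)) :=
    mem_extremePoints_iff_forall_segment.1 (ht (hsub hw))
  have hx := hext (w := x) (by simp)
  have hy := hext (w := y) (by simp)
  have hz := hext (w := z) (by simp)
  rcases (hline.subset (by simpa using hsub)).wbtw_or_wbtw_or_wbtw with h | h | h
  · exact (hy.2 x hx.1 z hz.1 h.mem_segment).elim hxy hyz.symm
  · exact (hz.2 y hy.1 x hx.1 h.mem_segment).elim hyz hxz
  · exact (hx.2 z hz.1 y hy.1 h.mem_segment).elim hxz.symm hxy.symm

lemma vadd_extremePoints_subset (u : E) (s : Set E) :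
    u +ᵥ s.extremePoints ℝ ⊆ (u +ᵥ s).extremePoints ℝ := by
  rintro _ ⟨x, hx, rfl⟩
  refine ⟨Set.vadd_mem_vadd_set hx.1, ?_⟩
  rintro _ ⟨y, hy, rfl⟩ _ ⟨z, hz, rfl⟩ hxyz
  exact congrArg (u +ᵥ ·) (hx.2 hy hz ((mem_openSegment_translate ℝ u).1 hxyz))

lemma extremePoints_vadd (u : E) (s : Set E) :
    (u +ᵥ s).extremePoints ℝ = u +ᵥ s.extremePoints ℝ := by
  refine (Set.subset_vadd_set_iff.2 ?_).antisymm (vadd_extremePoints_subset u s)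
  simpa only [neg_vadd_vadd] using vadd_extremePoints_subset (-u) (u +ᵥ s)

variable [TopologicalSpace E] [IsTopologicalAddGroup E] [ContinuousSMul ℝ E]

lemma eventually_add_smul_mem (ht : t ∈ 𝓝 x) (u : E) : ∀ᶠ r : ℝ in 𝓝[>] 0, x + r • u ∈ t := by
  have hcont : Tendsto (fun r : ℝ ↦ x + r • u) (𝓝 0) (𝓝 x) :=
    (by fun_prop : Continuous fun r : ℝ ↦ x + r • u).tendsto' 0 x (by simp)
  exact nhdsWithin_le_nhds (hcont.eventually ht)

lemma mem_extremePoints_of_mem_extremePoints_inter (hs : Convex ℝ s) (ht : t ∈ 𝓝 x)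
    (hx : x ∈ (s ∩ t).extremePoints ℝ) : x ∈ s.extremePoints ℝ := by
  refine mem_extremePoints_of_forall_add_sub hs hx.1.1 fun u hadd hsub ↦ ?_
  obtain ⟨r, hrt, hrt', hr1, hr0⟩ := ((eventually_add_smul_mem ht u).and
    ((eventually_add_smul_mem ht (-u)).and ((eventually_nhdsWithin_of_eventually_nhds
      (eventually_lt_nhds one_pos)).and self_mem_nhdsWithin))).exists
  have hrI : r ∈ Set.Icc (0 : ℝ) 1 := ⟨(Set.mem_Ioi.1 hr0).le, hr1.le⟩
  rw [sub_eq_add_neg] at hsub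
  have hru := eq_zero_of_mem_extremePoints hx ⟨hs.add_smul_mem hx.1.1 hadd hrI, hrt⟩
    (u := r • u) (by
      rw [sub_eq_add_neg, ← smul_neg]
      exact ⟨hs.add_smul_mem hx.1.1 hsub hrI, hrt'⟩)
  exact (smul_eq_zero_iff_right (Set.mem_Ioi.1 hr0).ne').1 hru

lemma finite_extremePoints_inter_halfSpace (hs : Convex ℝ s) (hf : (s.extremePoints ℝ).Finite)
    {f : E →L[ℝ] ℝ} {c : ℝ} (hline : Collinear ℝ {y | f y = c}) :
    ((s ∩ {y | f y ≤ c}).extremePoints ℝ).Finite := by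
  have hboundary := finite_of_subset_extremePoints_of_collinear Set.inter_subset_left
    (hline.subset (Set.inter_subset_right (s := (s ∩ {y | f y ≤ c}).extremePoints ℝ)))
  refine (hf.union hboundary).subset fun y hy ↦ ?_
  rcases (show f y ≤ c from hy.1.2).lt_or_eq with hlt | heq
  · have hnhds : {z | f z ≤ c} ∈ 𝓝 y := mem_of_superset
      ((isOpen_lt f.continuous continuous_const).mem_nhds hlt) fun z (hz : f z < c) ↦ hz.le
    exact .inl (mem_extremePoints_of_mem_extremePoints_inter hs hnhds hy)
  · exact .inr ⟨hy, heq⟩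

lemma subset_of_extremePoints_subset [T2Space E] [LocallyConvexSpace ℝ E] (hc : IsCompact s)
    (hs : Convex ℝ s) (ht : IsClosed t) (ht' : Convex ℝ t) (h : s.extremePoints ℝ ⊆ t) :
    s ⊆ t := by
  rw [← closure_convexHull_extremePoints hc hs]
  exact closure_minimal (convexHull_min h ht') ht

lemma exists_mem_extremePoints_forall_le [T2Space E] [LocallyConvexSpace ℝ E] (hc : IsCompact s)
    (hne : s.Nonempty) (f : E →L[ℝ] ℝ) : ∃ t ∈ s.extremePoints ℝ, ∀ y ∈ s, f y ≤ f t := by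
  obtain ⟨x, hx, hmax⟩ := hc.exists_isMaxOn hne f.continuous.continuousOn
  have hexp : IsExposed ℝ s (f.toExposed s) :=
    ContinuousLinearMap.toExposed.isExposed
  obtain ⟨t, ht⟩ := (hexp.isCompact hc).extremePoints_nonempty ⟨x, hx, hmax⟩
  exact ⟨t, hexp.isExtreme.extremePoints_subset_extremePoints ht, ht.1.2⟩

end ExtremePoints

/-! ### Polar coordinates and triangles in the plane -/

/-- The unit vector of the plane with polar angle `θ`. -/
def unitVec (θ : ℝ) : Pt := !₂[cos θ, sin θ]

/-- The determinant of two vectors of the plane, i.e. the signed area of the parallelogram that they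
span. -/
def planeDet (x y : Pt) : ℝ := x 0 * y 1 - x 1 * y 0

@[simp] lemma unitVec_apply_zero (θ : ℝ) : unitVec θ 0 = cos θ := rfl

@[simp] lemma unitVec_apply_one (θ : ℝ) : unitVec θ 1 = sin θ := rfl

lemma ext_coords {x y : Pt} (h0 : x 0 = y 0) (h1 : x 1 = y 1) : x = y := by
  ext i
  fin_cases i <;> assumption

lemma norm_unitVec (θ : ℝ) : ‖unitVec θ‖ = 1 := by
  simp [EuclideanSpace.norm_eq]

lemma unitVec_add_two_pi (θ : ℝ) : unitVec (θ + 2 * π) = unitVec θ := by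
  simp [unitVec]

lemma inner_unitVec_unitVec (θ φ : ℝ) : inner ℝ (unitVec θ) (unitVec φ) = cos (θ - φ) := by
  simp [PiLp.inner_apply, Fin.sum_univ_two, cos_sub]
  ring

lemma planeDet_unitVec_unitVec (θ φ : ℝ) : planeDet (unitVec θ) (unitVec φ) = sin (φ - θ) := by
  simp only [planeDet, unitVec_apply_zero, unitVec_apply_one, sin_sub]
  ring

lemma exists_eq_smul_unitVec (x : Pt) (a : ℝ) :
    ∃ r θ : ℝ, 0 ≤ r ∧ θ ∈ Set.Ico a (a + 2 * π) ∧ x = r • unitVec θ := by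
  let z : ℂ := ⟨x 0, x 1⟩
  refine ⟨‖z‖, toIcoMod two_pi_pos a z.arg, norm_nonneg _, toIcoMod_mem_Ico _ _ _, ?_⟩
  have hmod : toIcoMod two_pi_pos a z.arg = z.arg - toIcoDiv two_pi_pos a z.arg * (2 * π) := by
    rw [toIcoMod, zsmul_eq_mul]
  apply ext_coords
  · simp only [PiLp.smul_apply, unitVec_apply_zero, smul_eq_mul, hmod, cos_sub_int_mul_two_pi,
      Complex.norm_mul_cos_arg, z]
  · simp only [PiLp.smul_apply, unitVec_apply_one, smul_eq_mul, hmod, sin_sub_int_mul_two_pi,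
      Complex.norm_mul_sin_arg, z]

lemma eq_of_smul_unitVec_eq {r s θ φ : ℝ} (hr : 0 < r) (hs : 0 < s)
    (h : r • unitVec θ = s • unitVec φ) (hθφ : |θ - φ| < 2 * π) : θ = φ := by
  have hrs : r = s := by
    simpa [norm_smul, norm_unitVec, abs_of_pos, hr, hs] using congrArg norm h
  have hvec : unitVec θ = unitVec φ := smul_right_injective _ hr.ne' (hrs ▸ h)
  have hcos : cos (θ - φ) = 1 := by
    rw [← inner_unitVec_unitVec, hvec, inner_unitVec_unitVec, sub_self, cos_zero]
  linarith [(cos_eq_one_iff_of_lt_of_lt (abs_lt.1 hθφ).1 (abs_lt.1 hθφ).2).1 hcos]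

lemma planeDet_add_left (x y z : Pt) : planeDet (x + y) z = planeDet x z + planeDet y z := by
  simp [planeDet]; ring

lemma planeDet_add_right (x y z : Pt) : planeDet x (y + z) = planeDet x y + planeDet x z := by
  simp [planeDet]; ring

@[simp] lemma planeDet_smul_left (r : ℝ) (x y : Pt) : planeDet (r • x) y = r * planeDet x y := by
  simp [planeDet]; ring

@[simp] lemma planeDet_smul_right (r : ℝ) (x y : Pt) : planeDet x (r • y) = r * planeDet x y := by
  simp [planeDet]; ring

lemma isLinearMap_planeDet_left (y : Pt) : IsLinearMap ℝ fun x ↦ planeDet x y :=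
  ⟨fun x z ↦ planeDet_add_left x z y, fun r x ↦ planeDet_smul_left r x y⟩

lemma isLinearMap_planeDet_right (x : Pt) : IsLinearMap ℝ fun y ↦ planeDet x y :=
  ⟨planeDet_add_right x, fun r ↦ planeDet_smul_right r x⟩

@[fun_prop] lemma continuous_planeDet {X : Type*} [TopologicalSpace X] {f g : X → Pt}
    (hf : Continuous f) (hg : Continuous g) : Continuous fun x ↦ planeDet (f x) (g x) := by
  unfold planeDet
  fun_prop

lemma eq_smul_add_smul_of_planeDet_ne_zero {x y : Pt} (h : planeDet x y ≠ 0) (z : Pt) :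
    z = (planeDet z y / planeDet x y) • x + (planeDet x z / planeDet x y) • y := by
  apply ext_coords <;> simp only [PiLp.add_apply, PiLp.smul_apply, smul_eq_mul] <;>
    field_simp <;> simp only [planeDet] <;> ring

/-- The triangle in `ℝ × ℝ` with vertices `0`, `(1, 0)` and `(0, 1)`. -/
def standardTriangle : Set (ℝ × ℝ) := {p | 0 ≤ p.1 ∧ 0 ≤ p.2 ∧ p.1 + p.2 ≤ 1}

lemma measurableSet_standardTriangle : MeasurableSet standardTriangle :=
  ((isClosed_le continuous_const continuous_fst).inter
    ((isClosed_le continuous_const continuous_snd).inter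
      (isClosed_le (continuous_fst.add continuous_snd) continuous_const))).measurableSet

lemma volume_standardTriangle_le : volume standardTriangle ≤ ENNReal.ofReal (1 / 2) := by
  have hslice (x : ℝ) : volume (Prod.mk x ⁻¹' standardTriangle) ≤
      (Set.Icc (0 : ℝ) 1).indicator (fun x ↦ ENNReal.ofReal (1 - x)) x := by
    by_cases hx : x ∈ Set.Icc (0 : ℝ) 1
    · rw [Set.indicator_of_mem hx, ← sub_zero (1 - x), ← Real.volume_Icc]
      exact measure_mono fun y hy ↦ ⟨hy.2.1, le_sub_iff_add_le'.2 hy.2.2⟩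
    · rw [Set.indicator_of_notMem hx, nonpos_iff_eq_zero]
      refine measure_mono_null (fun y hy ↦ hx ⟨hy.1, ?_⟩) measure_empty
      linarith [hy.2.1, hy.2.2]
  have hint : ∫ x in (0 : ℝ)..1, (1 - x) = 1 / 2 := by
    rw [intervalIntegral.integral_sub (by simp) (by simp)]
    norm_num
  rw [Measure.volume_eq_prod, Measure.prod_apply measurableSet_standardTriangle, ← hint,
    intervalIntegral.integral_of_le zero_le_one, ← integral_Icc_eq_integral_Ioc,
    ofReal_integral_eq_lintegral_ofReal
      (by fun_prop : Continuous fun x : ℝ ↦ 1 - x).integrableOn_Icc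
      ((ae_restrict_mem measurableSet_Icc).mono fun x hx ↦ sub_nonneg.2 hx.2),
    ← lintegral_indicator measurableSet_Icc]
  exact lintegral_mono hslice

lemma volume_triangle_le (x y : Pt) :
    volume (convexHull ℝ {0, x, y}) ≤ ENNReal.ofReal (|planeDet x y| / 2) := by
  let b := (EuclideanSpace.basisFun (Fin 2) ℝ).toBasis
  let M : Pt →ₗ[ℝ] Pt := Matrix.toLin b b !![x 0, y 0; x 1, y 1]
  have hdet : LinearMap.det M = planeDet x y := by
    simp only [M, LinearMap.det_toLin, Matrix.det_fin_two_of, planeDet]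
    ring
  have hT : Convex ℝ {p : Pt | 0 ≤ p 0 ∧ 0 ≤ p 1 ∧ p 0 + p 1 ≤ 1} := by
    rintro p ⟨hp0, hp1, hp⟩ q ⟨hq0, hq1, hq⟩ s t hs ht hst
    simp only [Set.mem_ofPred_eq, PiLp.add_apply, PiLp.smul_apply, smul_eq_mul]
    exact ⟨by positivity, by positivity, by nlinarith⟩
  have hsub : convexHull ℝ {0, x, y} ⊆ M '' {p | 0 ≤ p 0 ∧ 0 ≤ p 1 ∧ p 0 + p 1 ≤ 1} := by
    have h0 : M (b 0) = x := by
      rw [Matrix.toLin_self]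
      apply ext_coords <;> simp [b]
    have h1 : M (b 1) = y := by
      rw [Matrix.toLin_self]
      apply ext_coords <;> simp [b]
    refine convexHull_min ?_ (hT.linear_image M)
    rintro _ (rfl | rfl | rfl)
    exacts [⟨0, by simp, map_zero M⟩, ⟨b 0, by simp [b], h0⟩, ⟨b 1, by simp [b], h1⟩]
  have he : MeasurePreserving fun p : Pt ↦ (p 0, p 1) :=
    (volume_preserving_finTwoArrow ℝ).comp (PiLp.volume_preserving_ofLp (Fin 2))
  have hvol : volume {p : Pt | 0 ≤ p 0 ∧ 0 ≤ p 1 ∧ p 0 + p 1 ≤ 1} ≤ ENNReal.ofReal (1 / 2) :=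
    (he.measure_preimage measurableSet_standardTriangle.nullMeasurableSet).trans_le
      volume_standardTriangle_le
  calc volume (convexHull ℝ {0, x, y})
      ≤ ENNReal.ofReal |planeDet x y| * ENNReal.ofReal (1 / 2) := by
        rw [← hdet]
        exact (measure_mono hsub).trans
          ((Measure.addHaar_image_linearMap volume M _).trans_le (mul_le_mul_right hvol _))
    _ = ENNReal.ofReal (|planeDet x y| / 2) := by
        rw [← ENNReal.ofReal_mul (abs_nonneg _)]
        ring_nf

lemma measureReal_le_of_subset_triangle {s : Set Pt} {x y : Pt} (hxy : 0 ≤ planeDet x y)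
    (h : s ⊆ convexHull ℝ {0, x, y}) : volume.real s ≤ planeDet x y / 2 := by
  rw [← abs_of_nonneg hxy]
  exact ENNReal.toReal_le_of_le_ofReal (by positivity)
    ((measure_mono h).trans (volume_triangle_le x y))

/-! ### The part of a convex set between two consecutive vertices -/

/-- The closed angular sector of the plane consisting of the rays with polar angle in `[a, b]`. -/
def sector (a b : ℝ) : Set Pt := {x | ∃ r θ : ℝ, 0 ≤ r ∧ θ ∈ Set.Icc a b ∧ x = r • unitVec θ}

/-- The polar angles of the extreme points of a set, as a `2 * π`-periodic set of reals. -/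
def vertexAngles (P : Set Pt) : Set ℝ := {θ | ∃ r : ℝ, 0 < r ∧ r • unitVec θ ∈ P.extremePoints ℝ}

lemma sector_subset_union (a t b : ℝ) : sector a b ⊆ sector a t ∪ sector t b := by
  rintro x ⟨r, θ, hr, ⟨ha, hb⟩, hx⟩
  exact (le_total θ t).imp (fun h ↦ ⟨r, θ, hr, ⟨ha, h⟩, hx⟩) fun h ↦ ⟨r, θ, hr, ⟨h, hb⟩, hx⟩

lemma sector_add_two_pi (a : ℝ) : sector a (a + 2 * π) = Set.univ := by
  refine Set.eq_univ_of_forall fun x ↦ ?_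
  obtain ⟨r, θ, hr, hθ, hx⟩ := exists_eq_smul_unitVec x a
  exact ⟨r, θ, hr, Set.Ico_subset_Icc_self hθ, hx⟩

lemma exists_eq_smul_unitVec_of_planeDet_pos {a : ℝ} {z : Pt} (hz : 0 < planeDet (unitVec a) z) :
    ∃ r θ : ℝ, 0 < r ∧ θ ∈ Set.Ioo a (a + π) ∧ z = r • unitVec θ := by
  obtain ⟨r, θ, hr, ⟨haθ, hθ⟩, rfl⟩ := exists_eq_smul_unitVec z a
  rw [planeDet_smul_right, planeDet_unitVec_unitVec] at hz
  have hsin : 0 < sin (θ - a) := pos_of_mul_pos_right hz hr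
  refine ⟨r, θ, pos_of_mul_pos_left hz hsin.le, ⟨haθ.lt_of_ne ?_, ?_⟩, rfl⟩
  · rintro rfl
    simp at hsin
  · by_contra! hπ
    have := sin_nonpos_of_nonpos_of_neg_pi_le (x := θ - a - 2 * π) (by linarith) (by linarith)
    rw [sin_sub_two_pi] at this
    linarith

section Vertices

open Filter Topology

variable {P : Set Pt}

lemma exists_extremePoint_planeDet_pos (hc : IsCompact P) (hP : Convex ℝ P) (h0 : 0 ∈ interior P)
    {x : Pt} (hx : x ≠ 0) : ∃ z ∈ P.extremePoints ℝ, 0 < planeDet x z := by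
  by_contra! hneg
  have hsub : P ⊆ {z | planeDet x z ≤ 0} := subset_of_extremePoints_subset hc hP
    (isClosed_le (by fun_prop) continuous_const)
    (convex_halfSpace_le (isLinearMap_planeDet_right x) 0) hneg
  obtain ⟨r, hrP, hr⟩ := ((eventually_add_smul_mem (mem_interior_iff_mem_nhds.1 h0)
    !₂[-x 1, x 0]).and self_mem_nhdsWithin).exists
  have hdet : planeDet x !₂[-x 1, x 0] = ‖x‖ ^ 2 := by
    simp [planeDet, EuclideanSpace.norm_sq_eq]
    ring
  have hle : planeDet x (0 + r • !₂[-x 1, x 0]) ≤ 0 := hsub hrP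
  rw [zero_add, planeDet_smul_right, hdet] at hle
  exact hle.not_gt (mul_pos hr (pow_pos (norm_pos_iff.2 hx) 2))

lemma le_one_of_smul_mem (hP : Convex ℝ P) (h0 : 0 ∈ interior P) {x : Pt}
    (hx : x ∈ P.extremePoints ℝ) {r : ℝ} (hr : r • x ∈ P) : r ≤ 1 := by
  by_contra! h1
  have hr0 : 0 < r := zero_lt_one.trans h1
  have hmem : x ∈ interior P := hP.openSegment_interior_self_subset_interior h0 hr
    ⟨1 - r⁻¹, r⁻¹, sub_pos.2 (inv_lt_one_of_one_lt₀ h1), inv_pos.2 hr0, by ring, by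
      rw [smul_zero, zero_add, inv_smul_smul₀ hr0.ne']⟩
  exact Set.disjoint_left.1 (disjoint_interior_extremePoints P) hmem hx

lemma inter_cone_subset_triangle (hc : IsCompact P) (hP : Convex ℝ P) {x y : Pt}
    (hxy : 0 < planeDet x y) (hx : ∀ r : ℝ, r • x ∈ P → r ≤ 1) (hy : ∀ r : ℝ, r • y ∈ P → r ≤ 1)
    (hno : ∀ z ∈ P.extremePoints ℝ, 0 < planeDet x z → planeDet z y ≤ 0) :
    P ∩ {z | 0 ≤ planeDet x z ∧ 0 ≤ planeDet z y} ⊆ convexHull ℝ {0, x, y} := by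
  have hcx : Continuous fun z ↦ planeDet x z := by fun_prop
  have hcy : Continuous fun z ↦ planeDet z y := by fun_prop
  have hclosed : IsClosed {z | 0 ≤ planeDet x z ∧ 0 ≤ planeDet z y} :=
    (isClosed_le continuous_const hcx).inter (isClosed_le continuous_const hcy)
  have hconv : Convex ℝ {z | 0 ≤ planeDet x z ∧ 0 ≤ planeDet z y} :=
    (convex_halfSpace_ge (isLinearMap_planeDet_right x) 0).inter
      (convex_halfSpace_ge (isLinearMap_planeDet_left y) 0)
  have h0 : (0 : Pt) ∈ convexHull ℝ {0, x, y} := subset_convexHull _ _ (by simp)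
  have hedge {r : ℝ} {w : Pt} (hw : w ∈ ({0, x, y} : Set Pt)) (hr : 0 ≤ r) (hr1 : r ≤ 1) :
      r • w ∈ convexHull ℝ {0, x, y} :=
    (convex_convexHull ℝ _).smul_mem_of_zero_mem h0 (subset_convexHull _ _ hw) ⟨hr, hr1⟩
  refine subset_of_extremePoints_subset (hc.inter_right hclosed) (hP.inter hconv)
    (Set.Finite.isCompact_convexHull ℝ (by simp)).isClosed (convex_convexHull ℝ _) fun z hz ↦ ?_
  obtain ⟨hzP, hxz, hzy⟩ := hz.1
  have hcoord := eq_smul_add_smul_of_planeDet_ne_zero hxy.ne' z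
  rcases hxz.eq_or_lt with h | hxz
  · rw [← h, zero_div, zero_smul, add_zero] at hcoord
    rw [hcoord] at hzP ⊢
    exact hedge (by simp) (by positivity) (hx _ hzP)
  rcases hzy.eq_or_lt with h | hzy
  · rw [← h, zero_div, zero_smul, zero_add] at hcoord
    rw [hcoord] at hzP ⊢
    exact hedge (by simp) (by positivity) (hy _ hzP)
  have hnhds : {z | 0 ≤ planeDet x z ∧ 0 ≤ planeDet z y} ∈ 𝓝 z :=
    mem_of_superset (((isOpen_lt continuous_const hcx).inter
      (isOpen_lt continuous_const hcy)).mem_nhds ⟨hxz, hzy⟩) fun w hw ↦ ⟨hw.1.le, hw.2.le⟩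
  exact absurd hzy (hno z (mem_extremePoints_of_mem_extremePoints_inter hP hnhds hz) hxz).not_gt

variable {a b r s : ℝ}

lemma sub_lt_pi_of_vertexAngles_disjoint (hc : IsCompact P) (hP : Convex ℝ P)
    (h0 : 0 ∈ interior P) (hno : Disjoint (vertexAngles P) (Set.Ioo a b)) : b - a < π := by
  obtain ⟨z, hz, hdet⟩ := exists_extremePoint_planeDet_pos hc hP h0
    (norm_ne_zero_iff.1 (norm_unitVec a ▸ one_ne_zero))
  obtain ⟨r, θ, hr, ⟨haθ, hθ⟩, rfl⟩ := exists_eq_smul_unitVec_of_planeDet_pos hdet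
  by_contra! hπ
  exact Set.disjoint_left.1 hno ⟨r, hr, hz⟩ ⟨haθ, by linarith⟩

lemma measureReal_inter_sector_le (hc : IsCompact P) (hP : Convex ℝ P) (h0 : 0 ∈ interior P)
    (hab : a < b) (hr : 0 < r) (ha : r • unitVec a ∈ P.extremePoints ℝ) (hs : 0 < s)
    (hb : s • unitVec b ∈ P.extremePoints ℝ)
    (hno : Disjoint (vertexAngles P) (Set.Ioo a b)) :
    volume.real (P ∩ sector a b) ≤ planeDet (r • unitVec a) (s • unitVec b) / 2 := by
  have hπ := sub_lt_pi_of_vertexAngles_disjoint hc hP h0 hno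
  have hdet : 0 < planeDet (r • unitVec a) (s • unitVec b) := by
    rw [planeDet_smul_left, planeDet_smul_right, planeDet_unitVec_unitVec]
    have := sin_pos_of_pos_of_lt_pi (sub_pos.2 hab) hπ
    positivity
  refine measureReal_le_of_subset_triangle hdet.le (Set.Subset.trans ?_
    (inter_cone_subset_triangle hc hP hdet (fun _ ↦ le_one_of_smul_mem hP h0 ha)
      (fun _ ↦ le_one_of_smul_mem hP h0 hb) fun z hz haz ↦ ?_))
  · rintro _ ⟨hxP, t, θ, ht, ⟨haθ, hθb⟩, rfl⟩
    refine ⟨hxP, ?_, ?_⟩ <;>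
      rw [planeDet_smul_left, planeDet_smul_right, planeDet_unitVec_unitVec] <;>
      have := sin_nonneg_of_nonneg_of_le_pi (x := θ - a) (by linarith) (by linarith) <;>
      have := sin_nonneg_of_nonneg_of_le_pi (x := b - θ) (by linarith) (by linarith) <;>
      positivity
  · rw [planeDet_smul_left] at haz
    obtain ⟨t, θ, ht, ⟨haθ, hθ⟩, rfl⟩ :=
      exists_eq_smul_unitVec_of_planeDet_pos (pos_of_mul_pos_right haz hr.le)
    have hbθ : b ≤ θ := not_lt.1 fun hθb ↦ Set.disjoint_left.1 hno ⟨t, ht, hz⟩ ⟨haθ, hθb⟩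
    rw [planeDet_smul_left, planeDet_smul_right, planeDet_unitVec_unitVec]
    have := sin_nonpos_of_nonpos_of_neg_pi_le (x := b - θ) (by linarith) (by linarith)
    exact mul_nonpos_of_nonneg_of_nonpos ht.le (mul_nonpos_of_nonneg_of_nonpos hs.le this)

lemma exists_injOn_vertexAngles (P : Set Pt) (a : ℝ) : ∃ f : ℝ → Pt,
    Set.MapsTo f (vertexAngles P ∩ Set.Ico a (a + 2 * π)) (P.extremePoints ℝ) ∧
      Set.InjOn f (vertexAngles P ∩ Set.Ico a (a + 2 * π)) := by
  choose! ρ hρ hmem using fun θ (hθ : θ ∈ vertexAngles P) ↦ hθ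
  refine ⟨fun θ ↦ ρ θ • unitVec θ, fun θ hθ ↦ hmem θ hθ.1, ?_⟩
  rintro θ ⟨hθ, haθ, hθa⟩ φ ⟨hφ, haφ, hφa⟩ h
  exact eq_of_smul_unitVec_eq (hρ θ hθ) (hρ φ hφ) h (abs_lt.2 ⟨by linarith, by linarith⟩)

lemma finite_vertexAngles_inter_Ico (hf : (P.extremePoints ℝ).Finite) (a : ℝ) :
    (vertexAngles P ∩ Set.Ico a (a + 2 * π)).Finite :=
  have ⟨_, hmaps, hinj⟩ := exists_injOn_vertexAngles P a
  Set.Finite.of_injOn hmaps hinj hf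

lemma ncard_vertexAngles_inter_Ico_le (hf : (P.extremePoints ℝ).Finite) (a : ℝ) :
    (vertexAngles P ∩ Set.Ico a (a + 2 * π)).ncard ≤ (P.extremePoints ℝ).ncard :=
  have ⟨_, hmaps, hinj⟩ := exists_injOn_vertexAngles P a
  Set.ncard_le_ncard_of_injOn _ hmaps hinj hf

end Vertices

/-! ### Unit disks truncated by chords at distance `1 / 2` from the center -/

/-- The midpoints of the arcs cut off by two chords at distance `1 / 2` from the center whose arcs
do not overlap, as a bi-infinite increasing sequence of polar angles. -/
structure IsChordSeq (σ : ℤ → ℝ) : Prop where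
  add_le_succ : ∀ j, σ j + 2 * π / 3 ≤ σ (j + 1)
  add_two : ∀ j, σ (j + 2) = σ j + 2 * π

/-- A pair `(θ, j)` such that `θ` lies between the arcs number `j - 1` and `j`. -/
def IsRest (σ : ℤ → ℝ) (p : ℝ × ℤ) : Prop :=
  σ (p.2 - 1) + π / 3 ≤ p.1 ∧ p.1 ≤ σ p.2 - π / 3

/-- `p` and `q` are the endpoints of the piece containing `θ` when the boundary of the truncated
disk is divided into its chords and the single points between them. -/
structure IsBracket (σ : ℤ → ℝ) (θ : ℝ) (p q : ℝ × ℤ) : Prop where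
  isRest_left : IsRest σ p
  isRest_right : IsRest σ q
  le_left : p.1 ≤ θ
  le_right : θ ≤ q.1
  eq_or_chord : p = q ∨ ∃ j, p = (σ j - π / 3, j) ∧ q = (σ j + π / 3, j + 1)

/-- The boundary point of the truncated disk with polar angle `p.1`, paired with the potential
`tangentSlope * p.1 - chordGain * p.2`. -/
def restPoint (p : ℝ × ℤ) : Pt × ℝ :=
  (unitVec p.1, tangentSlope * p.1 - chordGain * p.2)

/-- `w` is the potential at the polar angle `θ`: it equals `tangentSlope * θ - chordGain * j` after
`j` chords, and is affine along each chord. -/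
def HasPotential (σ : ℤ → ℝ) (θ w : ℝ) : Prop :=
  ∃ (p q : ℝ × ℤ) (ρ : ℝ), IsBracket σ θ p q ∧
    (ρ • unitVec θ, w) ∈ segment ℝ (restPoint p) (restPoint q)

lemma exists_smul_unitVec_mem_segment {a b θ : ℝ} (ha : a ≤ θ) (hb : θ ≤ b) (hab : b - a < π) :
    ∃ ρ : ℝ, ρ • unitVec θ ∈ segment ℝ (unitVec a) (unitVec b) := by
  rcases (ha.trans hb).eq_or_lt with rfl | hlt
  · obtain rfl := le_antisymm ha hb
    exact ⟨1, by simp⟩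
  have hsin {t : ℝ} (ht : 0 ≤ t) (ht' : t ≤ b - a) : 0 ≤ sin t :=
    sin_nonneg_of_nonneg_of_le_pi ht (ht'.trans hab.le)
  have hdet : 0 < planeDet (unitVec a) (unitVec b) := by
    rw [planeDet_unitVec_unitVec]
    exact sin_pos_of_pos_of_lt_pi (sub_pos.2 hlt) hab
  have hcoord := eq_smul_add_smul_of_planeDet_ne_zero hdet.ne' (unitVec θ)
  set A := planeDet (unitVec θ) (unitVec b) / planeDet (unitVec a) (unitVec b)
  set B := planeDet (unitVec a) (unitVec θ) / planeDet (unitVec a) (unitVec b) with hB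
  have hA0 : 0 ≤ A := div_nonneg (by
    rw [planeDet_unitVec_unitVec]; exact hsin (by linarith) (by linarith)) hdet.le
  have hB0 : 0 ≤ B := div_nonneg (by
    rw [planeDet_unitVec_unitVec]; exact hsin (by linarith) (by linarith)) hdet.le
  have hAB : 0 < A + B := by
    refine (add_nonneg hA0 hB0).lt_of_ne' fun h ↦ ?_
    rw [(add_eq_zero_iff_of_nonneg hA0 hB0).1 h |>.1,
      (add_eq_zero_iff_of_nonneg hA0 hB0).1 h |>.2, zero_smul, zero_smul, add_zero] at hcoord
    simpa [hcoord] using norm_unitVec θ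
  refine ⟨(A + B)⁻¹, A / (A + B), B / (A + B), by positivity, by positivity, by field_simp, ?_⟩
  rw [hcoord]
  module

lemma planeDet_le_of_mem_segment {c : ℝ} {y₀ y₁ z₀ z₁ y z : Pt × ℝ} (hy : y ∈ segment ℝ y₀ y₁)
    (hz : z ∈ segment ℝ z₀ z₁)
    (h : ∀ u ∈ ({y₀, y₁} : Set (Pt × ℝ)), ∀ v ∈ ({z₀, z₁} : Set (Pt × ℝ)),
      planeDet u.1 v.1 / 2 ≤ c + v.2 - u.2) :
    planeDet y.1 z.1 / 2 ≤ c + z.2 - y.2 := by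
  have hright (u : Pt × ℝ) (hu : ∀ v ∈ ({z₀, z₁} : Set (Pt × ℝ)),
      planeDet u.1 v.1 / 2 ≤ c + v.2 - u.2) : planeDet u.1 z.1 / 2 ≤ c + z.2 - u.2 := by
    have hlin : IsLinearMap ℝ fun v : Pt × ℝ ↦ planeDet u.1 v.1 / 2 - v.2 :=
      ⟨fun v w ↦ by simp [planeDet_add_right]; ring, fun r v ↦ by simp; ring⟩
    have := (convex_halfSpace_le hlin (c - u.2)).segment_subset
      (by have := hu z₀ (by simp); simp only [Set.mem_ofPred_eq]; linarith)
      (by have := hu z₁ (by simp); simp only [Set.mem_ofPred_eq]; linarith) hz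
    simp only [Set.mem_ofPred_eq] at this
    linarith
  have hlin : IsLinearMap ℝ fun v : Pt × ℝ ↦ planeDet v.1 z.1 / 2 + v.2 :=
    ⟨fun v w ↦ by simp [planeDet_add_left]; ring, fun r v ↦ by simp; ring⟩
  have := (convex_halfSpace_le hlin (c + z.2)).segment_subset
    (by have := hright y₀ (h y₀ (by simp)); simp only [Set.mem_ofPred_eq]; linarith)
    (by have := hright y₁ (h y₁ (by simp)); simp only [Set.mem_ofPred_eq]; linarith) hy
  simp only [Set.mem_ofPred_eq] at this
  linarith

lemma le_of_mem_segment_of_isBracket {σ : ℤ → ℝ} {θ r ρ : ℝ} {p q : ℝ × ℤ}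
    (h : IsBracket σ θ p q) (hρ : ρ • unitVec θ ∈ segment ℝ (unitVec p.1) (unitVec q.1))
    (hr : ‖r • unitVec θ‖ ≤ 1) (hcut : ∀ j, inner ℝ (r • unitVec θ) (unitVec (σ j)) ≤ 1 / 2) :
    r ≤ ρ := by
  rcases h.eq_or_chord with rfl | ⟨j, rfl, rfl⟩
  · obtain rfl := le_antisymm h.le_left h.le_right
    rw [segment_same, Set.mem_singleton_iff] at hρ
    have hdir := congrArg (fun x ↦ inner ℝ x (unitVec p.1)) hρ
    simp only [inner_smul_left, inner_unitVec_unitVec, sub_self, cos_zero] at hdir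
    rw [norm_smul, norm_unitVec, mul_one] at hr
    exact (le_abs_self r).trans (hr.trans_eq (by simpa using hdir.symm))
  · have hchord : inner ℝ (ρ • unitVec θ) (unitVec (σ j)) = 1 / 2 := by
      obtain ⟨x, y, -, -, hxy, hsum⟩ := hρ
      rw [← hsum, inner_add_left, inner_smul_left, inner_smul_left, inner_unitVec_unitVec,
        inner_unitVec_unitVec, sub_sub_cancel_left, add_sub_cancel_left, cos_neg, cos_pi_div_three]
      simp only [conj_trivial]
      linear_combination hxy / 2
    have hcut := (hcut j).trans_eq hchord.symm
    have hcos : 0 < cos (θ - σ j) := cos_pos_of_mem_Ioo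
      ⟨by linarith [h.le_left, pi_pos], by linarith [h.le_right, pi_pos]⟩
    simp only [inner_smul_left, inner_unitVec_unitVec, conj_trivial] at hcut
    exact le_of_mul_le_mul_right hcut hcos

lemma planeDet_restPoint_chord_reversed_le (σ : ℤ → ℝ) (j : ℤ) :
    planeDet (restPoint (σ j + π / 3, j + 1)).1 (restPoint (σ j - π / 3, j)).1 / 2 ≤
      tangentIntercept + (restPoint (σ j - π / 3, j)).2 - (restPoint (σ j + π / 3, j + 1)).2 := by
  have hsin : sin (σ j - π / 3 - (σ j + π / 3)) = -(√3 / 2) := by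
    rw [← sin_two_pi_div_three, ← sin_neg]
    ring_nf
  simp only [restPoint, planeDet_unitVec_unitVec, hsin]
  have := tangentIntercept_mem_Ioo.1
  unfold chordGain tangentSlope
  push_cast
  linarith

namespace IsChordSeq

variable {σ : ℤ → ℝ} (hσ : IsChordSeq σ)
include hσ

lemma add_natCast_le (j : ℤ) (n : ℕ) : σ j + 2 * π / 3 * n ≤ σ (j + n) := by
  induction n with
  | zero => simp
  | succ n ih =>
    have := hσ.add_le_succ (j + n)
    push_cast
    rw [← add_assoc]
    linarith

lemma monotone : Monotone σ :=
  monotone_int_of_le_succ fun j ↦ by linarith [hσ.add_le_succ j, Real.pi_pos]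

lemma add_le_of_lt {j l : ℤ} (h : j < l) : σ j + 2 * π / 3 ≤ σ l :=
  (hσ.add_le_succ j).trans (hσ.monotone h)

lemma index_le {p q : ℝ × ℤ} (hp : IsRest σ p) (hq : IsRest σ q) (hpq : p.1 ≤ q.1) :
    p.2 ≤ q.2 := by
  by_contra! h
  linarith [hp.1, hq.2, hσ.monotone (Int.le_sub_one_of_lt h), Real.pi_pos]

lemma isRest_shift {p : ℝ × ℤ} (hp : IsRest σ p) : IsRest σ (p.1 + 2 * π, p.2 + 2) := by
  refine ⟨?_, ?_⟩
  · rw [show p.2 + 2 - 1 = p.2 - 1 + 2 by ring, hσ.add_two]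
    linarith [hp.1]
  · rw [hσ.add_two]
    linarith [hp.2]

lemma planeDet_restPoint_le_of_le {p q : ℝ × ℤ} (hp : IsRest σ p) (hq : IsRest σ q)
    (hpq : p.1 ≤ q.1) :
    planeDet (restPoint p).1 (restPoint q).1 / 2 ≤
      tangentIntercept + (restPoint q).2 - (restPoint p).2 := by
  obtain ⟨s, hs⟩ := Int.le.dest (hσ.index_le hp hq hpq)
  have hgap : 2 * π / 3 * s ≤ q.1 - p.1 := by
    cases s with
    | zero => simpa using hpq
    | succ s =>
      have := hσ.add_natCast_le p.2 s
      have hq1 := hq.1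
      rw [← hs] at hq1
      push_cast at hq1 ⊢
      rw [show p.2 + (s + 1 : ℤ) - 1 = p.2 + s by ring] at hq1
      linarith [hp.2]
  have hs' : (q.2 : ℝ) = p.2 + s := by exact_mod_cast hs.symm
  have := half_sin_le_of_chords hgap
  simp only [restPoint, planeDet_unitVec_unitVec, hs']
  linarith

lemma isRest_chord_left (j : ℤ) : IsRest σ (σ j - π / 3, j) := by
  refine ⟨?_, le_rfl⟩
  have := hσ.add_le_of_lt (sub_one_lt j)
  simp only
  linarith

lemma isRest_chord_right (j : ℤ) : IsRest σ (σ j + π / 3, j + 1) := by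
  refine ⟨by simp, ?_⟩
  have := hσ.add_le_succ j
  simp only
  linarith

lemma exists_index (θ : ℝ) : ∃ j, σ (j - 1) + π / 3 ≤ θ ∧ θ < σ j + π / 3 := by
  have hper (m : ℤ) : σ (2 * m) = σ 0 + m * (2 * π) := by
    induction m using Int.induction_on with
    | zero => simp
    | succ i ih => rw [show (2 * (i + 1) : ℤ) = 2 * i + 2 by ring, hσ.add_two, ih]; push_cast; ring
    | pred i ih =>
      have := hσ.add_two (2 * (-i - 1))
      rw [show (2 * (-i - 1) + 2 : ℤ) = 2 * -i by ring, ih] at this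
      push_cast at this ⊢
      linarith
  obtain ⟨m, ⟨hm, hm'⟩, -⟩ := existsUnique_sub_zsmul_mem_Ico two_pi_pos θ (σ 0 + π / 3)
  rw [zsmul_eq_mul] at hm hm'
  rcases lt_or_ge θ (σ (2 * m + 1) + π / 3) with h | h
  · refine ⟨2 * m + 1, ?_, h⟩
    rw [add_sub_cancel_right, hper]
    linarith
  · refine ⟨2 * m + 2, ?_, ?_⟩
    · rwa [show 2 * m + 2 - 1 = 2 * m + 1 by ring]
    · rw [hσ.add_two, hper]
      linarith

lemma exists_isBracket (θ : ℝ) : ∃ p q, IsBracket σ θ p q := by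
  obtain ⟨j, hj, hj'⟩ := hσ.exists_index θ
  rcases le_total θ (σ j - π / 3) with h | h
  · exact ⟨(θ, j), (θ, j), ⟨hj, h⟩, ⟨hj, h⟩, le_rfl, le_rfl, .inl rfl⟩
  · exact ⟨_, _, hσ.isRest_chord_left j, hσ.isRest_chord_right j, h, hj'.le, .inr ⟨j, rfl, rfl⟩⟩

lemma exists_hasPotential (θ : ℝ) : ∃ w, HasPotential σ θ w := by
  obtain ⟨p, q, h⟩ := hσ.exists_isBracket θ
  have hpq : q.1 - p.1 < π := by
    rcases h.eq_or_chord with rfl | ⟨j, rfl, rfl⟩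
    · simpa using pi_pos
    · linarith [pi_pos]
  obtain ⟨ρ, x, y, hx, hy, hxy, hρ⟩ := exists_smul_unitVec_mem_segment h.le_left h.le_right hpq
  exact ⟨_, p, q, ρ, h, x, y, hx, hy, hxy, Prod.ext hρ rfl⟩

lemma hasPotential_add_two_pi {θ w : ℝ} (h : HasPotential σ θ w) :
    HasPotential σ (θ + 2 * π) (w + (tangentSlope * (2 * π) - 2 * chordGain)) := by
  obtain ⟨p, q, ρ, hpq, hseg⟩ := h
  have hshift (p : ℝ × ℤ) : restPoint (p.1 + 2 * π, p.2 + 2) =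
      (0, tangentSlope * (2 * π) - 2 * chordGain) + restPoint p := by
    simp only [restPoint, unitVec_add_two_pi, Prod.mk_add_mk, zero_add]
    push_cast
    ring_nf
  refine ⟨(p.1 + 2 * π, p.2 + 2), (q.1 + 2 * π, q.2 + 2), ρ,
    ⟨hσ.isRest_shift hpq.isRest_left, hσ.isRest_shift hpq.isRest_right,
      by simpa using hpq.le_left, by simpa using hpq.le_right, ?_⟩, ?_⟩
  · refine hpq.eq_or_chord.imp (by rintro rfl; rfl) ?_
    rintro ⟨j, rfl, rfl⟩
    exact ⟨j + 2, by rw [hσ.add_two]; ring_nf, by rw [hσ.add_two]; ring_nf⟩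
  · rw [hshift, hshift, unitVec_add_two_pi, add_comm w]
    simpa using (mem_segment_translate ℝ (0, tangentSlope * (2 * π) - 2 * chordGain)).2 hseg

lemma isBracket_le_or_eq {a b : ℝ} {p q p' q' : ℝ × ℤ} (hab : a < b) (h : IsBracket σ a p q)
    (h' : IsBracket σ b p' q') :
    q.1 ≤ p'.1 ∨ ∃ j, p = (σ j - π / 3, j) ∧ q = (σ j + π / 3, j + 1) ∧ p' = p ∧ q' = q := by
  rcases h.eq_or_chord with hq | ⟨j, rfl, rfl⟩ <;> rcases h'.eq_or_chord with hq' | ⟨l, rfl, rfl⟩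
  · exact .inl (hq ▸ h.le_left.trans (hab.le.trans (hq' ▸ h'.le_right)))
  · subst hq
    refine .inl ?_
    rcases le_or_gt p.2 l with hl | hl
    · exact h.isRest_left.2.trans (sub_le_sub_right (hσ.monotone hl) _)
    · linarith [h.isRest_left.1, hσ.monotone (Int.le_sub_one_of_lt hl), h.le_left, h'.le_right]
  · subst hq'
    refine .inl ?_
    rcases lt_or_ge j p'.2 with hj | hj
    · exact (add_le_add_left (hσ.monotone (Int.le_sub_one_of_lt hj)) _).trans h'.isRest_left.1
    · linarith [h'.isRest_left.2, hσ.monotone hj, h.le_left, h'.le_right]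
  · rcases lt_trichotomy j l with hjl | rfl | hlj
    · exact .inl (by linarith [hσ.add_le_of_lt hjl])
    · exact .inr ⟨j, rfl, rfl, rfl, rfl⟩
    · linarith [hσ.add_le_of_lt hlj, h.le_left, h'.le_right]

lemma planeDet_restPoint_le {a b : ℝ} {p q p' q' : ℝ × ℤ} (hab : a < b) (h : IsBracket σ a p q)
    (h' : IsBracket σ b p' q') {y z : ℝ × ℤ} (hy : y = p ∨ y = q) (hz : z = p' ∨ z = q') :
    planeDet (restPoint y).1 (restPoint z).1 / 2 ≤
      tangentIntercept + (restPoint z).2 - (restPoint y).2 := by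
  have hpq : p.1 ≤ q.1 := h.le_left.trans h.le_right
  have hpq' : p'.1 ≤ q'.1 := h'.le_left.trans h'.le_right
  rcases hσ.isBracket_le_or_eq hab h h' with hqp | ⟨j, rfl, rfl, rfl, rfl⟩
  · rcases hy with rfl | rfl <;> rcases hz with rfl | rfl <;>
      exact hσ.planeDet_restPoint_le_of_le (by first | exact h.isRest_left | exact h.isRest_right)
        (by first | exact h'.isRest_left | exact h'.isRest_right) (by linarith)
  · rcases hy with rfl | rfl <;> rcases hz with rfl | rfl
    · exact hσ.planeDet_restPoint_le_of_le h.isRest_left h.isRest_left le_rfl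
    · exact hσ.planeDet_restPoint_le_of_le h.isRest_left h.isRest_right hpq
    · exact planeDet_restPoint_chord_reversed_le σ j
    · exact hσ.planeDet_restPoint_le_of_le h.isRest_right h.isRest_right le_rfl

lemma planeDet_le_of_hasPotential {a b w w' r s : ℝ} (hab : a < b) (hba : b - a ≤ π)
    (h : HasPotential σ a w) (h' : HasPotential σ b w') (hr : 0 ≤ r) (hs : 0 ≤ s)
    (har : ‖r • unitVec a‖ ≤ 1) (hbs : ‖s • unitVec b‖ ≤ 1)
    (hacut : ∀ j, inner ℝ (r • unitVec a) (unitVec (σ j)) ≤ 1 / 2)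
    (hbcut : ∀ j, inner ℝ (s • unitVec b) (unitVec (σ j)) ≤ 1 / 2) :
    planeDet (r • unitVec a) (s • unitVec b) / 2 ≤ tangentIntercept + w' - w := by
  obtain ⟨p, q, ρ, hpq, hseg⟩ := h
  obtain ⟨p', q', ρ', hpq', hseg'⟩ := h'
  have hfst {x y z : Pt × ℝ} (hx : x ∈ segment ℝ y z) : x.1 ∈ segment ℝ y.1 z.1 :=
    have ⟨u, v, hu, hv, huv, h⟩ := hx
    ⟨u, v, hu, hv, huv, congrArg Prod.fst h⟩
  have hrρ := le_of_mem_segment_of_isBracket hpq (hfst hseg) har hacut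
  have hsρ := le_of_mem_segment_of_isBracket hpq' (hfst hseg') hbs hbcut
  have hsin : 0 ≤ sin (b - a) := sin_nonneg_of_nonneg_of_le_pi (sub_nonneg.2 hab.le) hba
  have hmono : planeDet (r • unitVec a) (s • unitVec b) ≤
      planeDet (ρ • unitVec a) (ρ' • unitVec b) := by
    simp only [planeDet_smul_left, planeDet_smul_right, planeDet_unitVec_unitVec]
    exact mul_le_mul hsρ (mul_le_mul_of_nonneg_right hrρ hsin) (mul_nonneg hr hsin) (hs.trans hsρ)
  refine (div_le_div_of_nonneg_right hmono zero_le_two).trans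
    (planeDet_le_of_mem_segment hseg hseg' ?_)
  rintro _ (rfl | rfl) _ (rfl | rfl) <;>
    exact hσ.planeDet_restPoint_le hab hpq hpq' (by simp) (by simp)

end IsChordSeq

/-! ### The area of a convex subset of a truncated disk -/

lemma le_ncard_mul_add_of_forall_gap {A : Set ℝ} {F : ℝ → ℝ → ℝ} {R : ℝ → ℝ → Prop} {c : ℝ}
    (hF : ∀ a t b, F a b ≤ F a t + F t b) (hR : ∀ t, ∃ w, R t w)
    (hgap : ∀ ⦃a b⦄, a ∈ A → b ∈ A → a < b → Disjoint A (Set.Ioo a b) →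
      ∀ ⦃w w'⦄, R a w → R b w' → F a b ≤ c + w' - w)
    {a b w w' : ℝ} (ha : a ∈ A) (hb : b ∈ A) (hab : a < b) (hfin : (A ∩ Set.Ico a b).Finite)
    (hw : R a w) (hw' : R b w') :
    F a b ≤ c * (A ∩ Set.Ico a b).ncard + (w' - w) := by
  induction hn : (A ∩ Set.Ico a b).ncard using Nat.strong_induction_on
    generalizing a b w w' with | _ n ih
  by_cases hno : Disjoint A (Set.Ioo a b)
  · have hsingle : A ∩ Set.Ico a b = {a} := by
      rw [← Set.Ioo_insert_left hab, Set.inter_insert_of_mem ha, hno.inter_eq,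
        insert_empty_eq]
    rw [← hn, hsingle, Set.ncard_singleton, Nat.cast_one]
    linarith [hgap ha hb hab hno hw hw']
  obtain ⟨t, ht, hat, htb⟩ := Set.not_disjoint_iff.1 hno
  obtain ⟨v, hv⟩ := hR t
  have hsplit : A ∩ Set.Ico a b = (A ∩ Set.Ico a t) ∪ (A ∩ Set.Ico t b) := by
    rw [← Set.inter_union_distrib_left, Set.Ico_union_Ico_eq_Ico hat.le htb.le]
  have hfin₁ := hfin.subset (hsplit ▸ Set.subset_union_left)
  have hfin₂ := hfin.subset (hsplit ▸ Set.subset_union_right)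
  have hcard : (A ∩ Set.Ico a t).ncard + (A ∩ Set.Ico t b).ncard = n := by
    rw [← hn, hsplit, Set.ncard_union_eq _ hfin₁ hfin₂]
    exact (Set.Ico_disjoint_Ico_same.mono Set.inter_subset_right Set.inter_subset_right)
  have hpos₁ := (Set.ncard_pos hfin₁).2 ⟨a, ha, le_rfl, hat⟩
  have hpos₂ := (Set.ncard_pos hfin₂).2 ⟨t, ht, le_rfl, htb⟩
  have h₁ := ih _ (by lia) ha ht hat hfin₁ hw hv rfl
  have h₂ := ih _ (by lia) ht hb htb hfin₂ hv hw' rfl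
  rw [← hcard, Nat.cast_add]
  linarith [hF a t b]

section TruncatedDisk

variable {P : Set Pt}

lemma measureReal_le_of_isChordSeq (hc : IsCompact P) (hP : Convex ℝ P) (h0 : 0 ∈ interior P)
    (hf : (P.extremePoints ℝ).Finite) (hdisk : P ⊆ closedBall 0 1) {σ : ℤ → ℝ}
    (hσ : IsChordSeq σ) (hcut : ∀ x ∈ P, ∀ j, inner ℝ x (unitVec (σ j)) ≤ 1 / 2) :
    volume.real P ≤ tangentIntercept * (P.extremePoints ℝ).ncard +
      (tangentSlope * (2 * π) - 2 * chordGain) := by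
  obtain ⟨z, hz, hdet⟩ := exists_extremePoint_planeDet_pos hc hP h0
    (norm_ne_zero_iff.1 (norm_unitVec 0 ▸ one_ne_zero))
  obtain ⟨r, a, hr, -, rfl⟩ := exists_eq_smul_unitVec_of_planeDet_pos hdet
  obtain ⟨w, hw⟩ := hσ.exists_hasPotential a
  have hgap ⦃a b : ℝ⦄ (ha : a ∈ vertexAngles P) (hb : b ∈ vertexAngles P) (hab : a < b)
      (hno : Disjoint (vertexAngles P) (Set.Ioo a b)) ⦃w w' : ℝ⦄ (hw : HasPotential σ a w)
      (hw' : HasPotential σ b w') :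
      volume.real (P ∩ sector a b) ≤ tangentIntercept + w' - w := by
    obtain ⟨r, hr, har⟩ := ha
    obtain ⟨s, hs, hbs⟩ := hb
    exact (measureReal_inter_sector_le hc hP h0 hab hr har hs hbs hno).trans
      (hσ.planeDet_le_of_hasPotential hab (sub_lt_pi_of_vertexAngles_disjoint hc hP h0 hno).le
        hw hw' hr.le hs.le (mem_closedBall_zero_iff.1 (hdisk har.1))
        (mem_closedBall_zero_iff.1 (hdisk hbs.1)) (hcut _ har.1) (hcut _ hbs.1))
  have hsector (a t b : ℝ) : volume.real (P ∩ sector a b) ≤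
      volume.real (P ∩ sector a t) + volume.real (P ∩ sector t b) := by
    refine (measureReal_mono ?_ ?_).trans (measureReal_union_le _ _)
    · rw [← Set.inter_union_distrib_left]
      exact Set.inter_subset_inter_right P (sector_subset_union a t b)
    · rw [← Set.inter_union_distrib_left]
      exact measure_ne_top_of_subset Set.inter_subset_left hc.measure_ne_top
  have hsum := le_ncard_mul_add_of_forall_gap hsector hσ.exists_hasPotential hgap
    (a := a) (b := a + 2 * π) ⟨r, hr, hz⟩ ⟨r, hr, by rwa [unitVec_add_two_pi]⟩
    (by linarith [pi_pos]) (finite_vertexAngles_inter_Ico hf a) hw (hσ.hasPotential_add_two_pi hw)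
  rw [sector_add_two_pi, Set.inter_univ, add_sub_cancel_left] at hsum
  have hcard : ((vertexAngles P ∩ Set.Ico a (a + 2 * π)).ncard : ℝ) ≤ (P.extremePoints ℝ).ncard :=
    mod_cast ncard_vertexAngles_inter_Ico_le hf a
  have := mul_le_mul_of_nonneg_left hcard tangentIntercept_nonneg
  linarith

lemma isChordSeq_of_sub_mem_Icc {α β : ℝ} (h : β - α ∈ Set.Icc (2 * π / 3) (4 * π / 3)) :
    IsChordSeq fun j ↦ (if Even j then α else β) + (j / 2 : ℤ) * (2 * π) where
  add_le_succ j := by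
    obtain ⟨h₁, h₂⟩ := h
    rcases Int.even_or_odd j with hj | hj
    · rw [if_pos hj, if_neg (Int.not_even_iff_odd.2 hj.add_one),
        show (j + 1) / 2 = j / 2 by obtain ⟨m, rfl⟩ := hj; omega]
      linarith
    · rw [if_neg (Int.not_even_iff_odd.2 hj), if_pos hj.add_one,
        show (j + 1) / 2 = j / 2 + 1 by obtain ⟨m, rfl⟩ := hj; omega]
      push_cast
      linarith
  add_two j := by
    simp only [Int.even_add, even_two, iff_true, show (j + 2) / 2 = j / 2 + 1 by omega]
    push_cast
    ring

lemma mem_Icc_of_cos_le {d : ℝ} (h0 : 0 ≤ d) (h : d < 2 * π) (hcos : cos d ≤ -(1 / 2)) :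
    d ∈ Set.Icc (2 * π / 3) (4 * π / 3) := by
  have hle {t : ℝ} (ht : 0 ≤ t) (htcos : cos t ≤ -(1 / 2)) : 2 * π / 3 ≤ t := by
    by_contra! hlt
    have := cos_lt_cos_of_nonneg_of_le_pi ht (by linarith [pi_pos]) hlt
    linarith [cos_two_pi_div_three]
  exact ⟨hle h0 hcos, by linarith [hle (sub_nonneg.2 h.le) ((cos_two_pi_sub d).trans_le hcos)]⟩

lemma exists_isChordSeq {u v : Pt} (hu : ‖u‖ = 1) (hv : ‖v‖ = 1)
    (huv : inner ℝ u v ≤ -(1 / 2)) :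
    ∃ σ, IsChordSeq σ ∧ ∀ j, unitVec (σ j) = u ∨ unitVec (σ j) = v := by
  have hpolar {x : Pt} (hx : ‖x‖ = 1) (a : ℝ) : ∃ θ ∈ Set.Ico a (a + 2 * π), x = unitVec θ := by
    obtain ⟨r, θ, hr, hθ, rfl⟩ := exists_eq_smul_unitVec x a
    rw [norm_smul, norm_unitVec, mul_one, norm_of_nonneg hr] at hx
    exact ⟨θ, hθ, by rw [hx, one_smul]⟩
  obtain ⟨α, -, rfl⟩ := hpolar hu 0
  obtain ⟨β, ⟨hαβ, hβα⟩, rfl⟩ := hpolar hv α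
  rw [inner_unitVec_unitVec, ← cos_neg, neg_sub] at huv
  have hperiod (θ : ℝ) (m : ℤ) : unitVec (θ + m * (2 * π)) = unitVec θ := by
    simp only [unitVec, cos_add_int_mul_two_pi, sin_add_int_mul_two_pi]
  refine ⟨_, isChordSeq_of_sub_mem_Icc (mem_Icc_of_cos_le (by linarith) (by linarith) huv), ?_⟩
  intro j
  rw [hperiod]
  split_ifs
  · exact .inl rfl
  · exact .inr rfl

lemma measureReal_le_pi {p : Pt} (hdisk : P ⊆ closedBall p 1) : volume.real P ≤ π := by
  refine (measureReal_mono hdisk measure_closedBall_lt_top.ne).trans_eq ?_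
  rw [measureReal_def, EuclideanSpace.volume_closedBall_fin_two]
  simp [pi_pos.le]

lemma measureReal_le_of_zero_notMem_interior (hP : Convex ℝ P) (h0 : 0 ∉ interior P)
    (hdisk : P ⊆ closedBall 0 1) : volume.real P ≤ π / 2 := by
  have hdisj : Disjoint (interior P) (-interior P) := by
    refine Set.disjoint_left.2 fun x hx hx' ↦ h0 ?_
    have := hP.interior.midpoint_mem hx hx'
    rwa [midpoint_self_neg] at this
  have hdisk' : interior P ⊆ closedBall 0 1 := interior_subset.trans hdisk
  have hneg : -interior P ⊆ closedBall 0 1 := fun x hx ↦ by simpa using hdisk' hx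
  have hvol : volume.real (interior P) = volume.real P :=
    measureReal_congr (interior_ae_eq_of_null_frontier (hP.addHaar_frontier volume))
  have hunion := measureReal_le_pi (Set.union_subset hdisk' hneg)
  rw [measureReal_union hdisj isOpen_interior.neg.measurableSet
      (measure_ne_top_of_subset hdisk' measure_closedBall_lt_top.ne)
      (measure_ne_top_of_subset hneg measure_closedBall_lt_top.ne),
    measureReal_def volume (-interior P), Measure.measure_neg, ← measureReal_def, hvol] at hunion
  linarith

lemma measureReal_le_of_inner_le (hc : IsCompact P) (hP : Convex ℝ P)
    (hf : (P.extremePoints ℝ).Finite) (hdisk : P ⊆ closedBall 0 1) {u v : Pt} (hu : ‖u‖ = 1)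
    (hv : ‖v‖ = 1) (huv : inner ℝ u v ≤ -(1 / 2))
    (hcut : ∀ x ∈ P, inner ℝ x u ≤ 1 / 2 ∧ inner ℝ x v ≤ 1 / 2) :
    volume.real P ≤ tangentIntercept * (P.extremePoints ℝ).ncard +
      (tangentSlope * (2 * π) - 2 * chordGain) := by
  by_cases h0 : 0 ∈ interior P
  · obtain ⟨σ, hσ, huv⟩ := exists_isChordSeq hu hv huv
    refine measureReal_le_of_isChordSeq hc hP h0 hf hdisk hσ fun x hx j ↦ ?_
    rcases huv j with h | h <;> rw [h]
    exacts [(hcut x hx).1, (hcut x hx).2]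
  · have hcard := mul_nonneg tangentIntercept_nonneg (Nat.cast_nonneg (P.extremePoints ℝ).ncard)
    linarith [measureReal_le_of_zero_notMem_interior hP h0 hdisk, pi_lt_d2,
      six_mul_tangentIntercept_add, tangentIntercept_mem_Ioo.2, sqrt_three_mem_Ioo.1]

end TruncatedDisk

/-! ### Voronoi cells -/

section Voronoi

open Filter Topology Module

section Metric

variable {X : Type*} [PseudoMetricSpace X] {P : Set X} {S T : Finset X} {p x : X}

/-- The part of `P` consisting of the points that have `p` as a nearest site among `S`. -/
def voronoiCell (P : Set X) (S : Finset X) (p : X) : Set X :=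
  {x ∈ P | ∀ q ∈ S, dist x p ≤ dist x q}

lemma voronoiCell_subset : voronoiCell P S p ⊆ P := fun _ hx ↦ hx.1

lemma isCompact_voronoiCell (hc : IsCompact P) : IsCompact (voronoiCell P S p) := by
  have : voronoiCell P S p = P ∩ ⋂ q ∈ S, {x | dist x p ≤ dist x q} := by
    ext x
    simp [voronoiCell]
  rw [this]
  exact hc.inter_right (isClosed_biInter fun q _ ↦
    isClosed_le (continuous_id.dist continuous_const) (continuous_id.dist continuous_const))

lemma exists_mem_voronoiCell (hS : S.Nonempty) (hx : x ∈ P) : ∃ p ∈ S, x ∈ voronoiCell P S p :=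
  have ⟨p, hp, hmin⟩ := S.exists_min_image (dist x) hS
  ⟨p, hp, hx, hmin⟩

lemma voronoiCell_eq_of_subset (hTS : T ⊆ S) (hcover : P ⊆ ⋃ q ∈ T, voronoiCell P S q) :
    voronoiCell P T p = voronoiCell P S p := by
  refine Set.Subset.antisymm (fun x hx ↦ ?_) fun x hx ↦ ⟨hx.1, fun q hq ↦ hx.2 q (hTS hq)⟩
  obtain ⟨q, hq, hxq⟩ := Set.mem_iUnion₂.1 (hcover hx.1)
  exact ⟨hx.1, fun s hs ↦ (hx.2 q hq).trans (hxq.2 s hs)⟩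

lemma voronoiCell_subset_closedBall {r : ℝ} (hcover : P ⊆ ⋃ q ∈ S, closedBall q r) :
    voronoiCell P S p ⊆ closedBall p r := fun _ hx ↦
  have ⟨q, hq, hxq⟩ := Set.mem_iUnion₂.1 (hcover hx.1)
  (hx.2 q hq).trans hxq

lemma measureReal_le_sum_voronoiCell [MeasurableSpace X] {μ : Measure X} (hS : S.Nonempty)
    (hP : μ P ≠ ∞) : μ.real P ≤ ∑ p ∈ S, μ.real (voronoiCell P S p) := by
  have hunion : P ⊆ ⋃ p ∈ S, voronoiCell P S p := fun x hx ↦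
    have ⟨_, hp, hxp⟩ := exists_mem_voronoiCell hS hx
    Set.mem_biUnion (Finset.mem_coe.2 hp) hxp
  refine (measureReal_mono hunion ?_).trans (measureReal_biUnion_finset_le _ _)
  exact measure_ne_top_of_subset (Set.iUnion₂_subset fun _ _ ↦ voronoiCell_subset) hP

end Metric

variable {E : Type*} [NormedAddCommGroup E] [InnerProductSpace ℝ E] {P : Set E} {S : Finset E}
  {p q u v x : E}

lemma exists_forall_inner_eq_zero [Fact (finrank ℝ E = 2)] (hu : u ≠ 0) :
    ∃ e : E, ∀ x, inner ℝ u x = 0 → ∃ r : ℝ, r • e = x := by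
  have : Fact (finrank ℝ E = 1 + 1) := ‹_›
  obtain ⟨e, -, he⟩ := finrank_eq_one_iff'.1
    (Submodule.finrank_orthogonal_span_singleton (𝕜 := ℝ) hu)
  refine ⟨e, fun x hx ↦ ?_⟩
  obtain ⟨r, hr⟩ := he ⟨x, Submodule.mem_orthogonal_singleton_iff_inner_right.2 hx⟩
  exact ⟨r, congrArg Subtype.val hr⟩

lemma collinear_inner_eq [Fact (finrank ℝ E = 2)] (hu : u ≠ 0) (c : ℝ) :
    Collinear ℝ {x | inner ℝ u x = c} := by
  obtain ⟨e, he⟩ := exists_forall_inner_eq_zero hu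
  obtain hempty | ⟨y, hy⟩ := Set.eq_empty_or_nonempty {x | inner ℝ u x = c}
  · exact hempty ▸ collinear_empty ℝ E
  · refine (collinear_iff_of_mem hy).2 ⟨e, fun x hx ↦ ?_⟩
    rw [Set.mem_ofPred_eq] at hx hy
    obtain ⟨r, hr⟩ := he (x - y) (by rw [inner_sub_right, hx, hy, sub_self])
    exact ⟨r, by rw [hr, vadd_eq_add, sub_add_cancel]⟩

lemma dist_le_dist_iff_inner_sub_le :
    dist x p ≤ dist x q ↔ inner ℝ x (q - p) ≤ (‖q‖ ^ 2 - ‖p‖ ^ 2) / 2 := by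
  rw [dist_eq_norm, dist_eq_norm, ← sq_le_sq₀ (norm_nonneg _) (norm_nonneg _), norm_sub_sq_real,
    norm_sub_sq_real, inner_sub_right]
  constructor <;> intro h <;> linarith

lemma dist_add_le_dist_add_iff (h : dist v p = dist v q) :
    dist (v + u) p ≤ dist (v + u) q ↔ inner ℝ u q ≤ inner ℝ u p := by
  have h₁ := dist_le_dist_iff_inner_sub_le.1 h.le
  have h₂ := dist_le_dist_iff_inner_sub_le.1 h.ge
  rw [dist_le_dist_iff_inner_sub_le, inner_add_left, inner_sub_right u]
  rw [inner_sub_right] at h₁ h₂ ⊢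
  constructor <;> intro h <;> linarith

lemma voronoiCell_insert [DecidableEq E] : voronoiCell P (insert q S) p =
    voronoiCell P S p ∩ {x | inner ℝ x (q - p) ≤ (‖q‖ ^ 2 - ‖p‖ ^ 2) / 2} := by
  ext x
  simp only [voronoiCell, Finset.forall_mem_insert, Set.mem_inter_iff, Set.mem_ofPred_eq,
    ← dist_le_dist_iff_inner_sub_le]
  tauto

lemma convex_voronoiCell (hP : Convex ℝ P) : Convex ℝ (voronoiCell P S p) := by
  classical
  induction S using Finset.induction_on with
  | empty => simpa [voronoiCell] using hP
  | insert q S _ ih =>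
    rw [voronoiCell_insert]
    exact ih.inter (convex_halfSpace_le ⟨fun _ _ ↦ inner_add_left .., fun _ _ ↦
      real_inner_smul_left ..⟩ _)

lemma disjoint_interior_voronoiCell (hp : p ∈ S) (hq : q ∈ S) (hpq : p ≠ q) :
    Disjoint (interior (voronoiCell P S p)) (voronoiCell P S q) := by
  refine Set.disjoint_left.2 fun x hxp hxq ↦ hpq ?_
  have hx := interior_subset hxp
  obtain ⟨r, hr, hr0⟩ := ((eventually_add_smul_mem (mem_interior_iff_mem_nhds.1 hxp)
    (q - p)).and self_mem_nhdsWithin).exists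
  have hle := (dist_add_le_dist_add_iff (le_antisymm (hx.2 q hq) (hxq.2 p hp))).1 (hr.2 q hq)
  rw [real_inner_smul_left, real_inner_smul_left, mul_le_mul_iff_right₀ hr0, ← sub_nonpos,
    ← inner_sub_right, real_inner_self_nonpos, sub_eq_zero] at hle
  exact hle.symm

lemma eventually_add_smul_mem_voronoiCell (hP : Convex ℝ P) (hp : p ∈ S)
    (hv : v ∈ voronoiCell P S p) (hu : v + u ∈ P)
    (huv : ∀ q ∈ S, v ∈ voronoiCell P S q → inner ℝ u q = inner ℝ u p) :
    ∀ᶠ r : ℝ in 𝓝[>] 0, v + r • u ∈ voronoiCell P S p := by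
  have hle (q : E) (hq : q ∈ S) : ∀ᶠ r : ℝ in 𝓝[>] 0, dist (v + r • u) p ≤ dist (v + r • u) q := by
    by_cases hvq : v ∈ voronoiCell P S q
    · refine .of_forall fun r ↦
        (dist_add_le_dist_add_iff (le_antisymm (hv.2 q hq) (hvq.2 p hp))).2 ?_
      rw [real_inner_smul_left, real_inner_smul_left, huv q hq hvq]
    · have hlt : dist v p < dist v q :=
        (hv.2 q hq).lt_of_ne fun h ↦ hvq ⟨hv.1, fun s hs ↦ h ▸ hv.2 s hs⟩
      exact (eventually_add_smul_mem ((isOpen_lt (continuous_id.dist continuous_const)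
        (continuous_id.dist continuous_const)).mem_nhds hlt) u).mono fun r hr ↦ le_of_lt hr
  filter_upwards [(Finset.eventually_all S).2 hle, self_mem_nhdsWithin,
    eventually_nhdsWithin_of_eventually_nhds (eventually_lt_nhds one_pos)] with r hr hr0 hr1
  exact ⟨hP.add_smul_mem hv.1 hu ⟨hr0.le, hr1.le⟩, hr⟩

lemma mem_extremePoints_voronoiCell_iff (hP : Convex ℝ P) (hp : p ∈ S)
    (hv : v ∈ voronoiCell P S p) :
    v ∈ (voronoiCell P S p).extremePoints ℝ ↔ ∀ u, v + u ∈ P → v - u ∈ P →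
      (∀ q ∈ S, v ∈ voronoiCell P S q → inner ℝ u q = inner ℝ u p) → u = 0 := by
  refine ⟨fun hext u hadd hsub hu ↦ ?_, fun h ↦
    mem_extremePoints_of_forall_add_sub (convex_voronoiCell hP) hv fun u hadd hsub ↦
      h u hadd.1 hsub.1 fun q hq hvq ↦ ?_⟩
  · rw [sub_eq_add_neg] at hsub
    obtain ⟨r, hr, hr', hr0⟩ := ((eventually_add_smul_mem_voronoiCell hP hp hv hadd hu).and
      ((eventually_add_smul_mem_voronoiCell hP hp hv hsub fun q hq hvq ↦ by
        rw [inner_neg_left, inner_neg_left, hu q hq hvq]).and self_mem_nhdsWithin)).exists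
    rw [smul_neg, ← sub_eq_add_neg] at hr'
    exact (smul_eq_zero.1 (eq_zero_of_mem_extremePoints hext hr hr')).resolve_left hr0.ne'
  · have hdist : dist v p = dist v q := le_antisymm (hv.2 q hq) (hvq.2 p hp)
    rw [sub_eq_add_neg] at hsub
    have hle := (dist_add_le_dist_add_iff hdist).1 (hadd.2 q hq)
    have hge := (dist_add_le_dist_add_iff hdist).1 (hsub.2 q hq)
    rw [inner_neg_left, inner_neg_left, neg_le_neg_iff] at hge
    exact le_antisymm hle hge

lemma mem_extremePoints_voronoiCell_of_mem (hP : Convex ℝ P) (hp : p ∈ S) (hq : q ∈ S)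
    (hv : v ∈ (voronoiCell P S p).extremePoints ℝ) (hvq : v ∈ voronoiCell P S q) :
    v ∈ (voronoiCell P S q).extremePoints ℝ := by
  refine (mem_extremePoints_voronoiCell_iff hP hq hvq).2 fun u hadd hsub hu ↦
    (mem_extremePoints_voronoiCell_iff hP hp hv.1).1 hv u hadd hsub fun s hs hvs ↦ ?_
  rw [hu s hs hvs, hu p hp hv.1]

open scoped Classical in
/-- The sites whose cells have `v` as an extreme point. -/
def incidentSites (P : Set E) (S : Finset E) (v : E) : Finset E :=
  {p ∈ S | v ∈ (voronoiCell P S p).extremePoints ℝ}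

lemma mem_incidentSites :
    p ∈ incidentSites P S v ↔ p ∈ S ∧ v ∈ (voronoiCell P S p).extremePoints ℝ := by
  classical exact Finset.mem_filter

lemma eq_zero_of_forall_incidentSites (hP : Convex ℝ P) (hp : p ∈ incidentSites P S v)
    (hadd : v + u ∈ P) (hsub : v - u ∈ P)
    (hu : ∀ q ∈ incidentSites P S v, inner ℝ u q = inner ℝ u p) : u = 0 := by
  obtain ⟨hpS, hv⟩ := mem_incidentSites.1 hp
  exact (mem_extremePoints_voronoiCell_iff hP hpS hv.1).1 hv u hadd hsub fun q hq hvq ↦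
    hu q (mem_incidentSites.2 ⟨hq, mem_extremePoints_voronoiCell_of_mem hP hpS hq hv hvq⟩)

lemma one_lt_card_incidentSites (hP : Convex ℝ P) (hp : p ∈ incidentSites P S v)
    (hv : v ∉ P.extremePoints ℝ) : 1 < (incidentSites P S v).card := by
  contrapose! hv
  refine mem_extremePoints_of_forall_add_sub hP (mem_incidentSites.1 hp).2.1.1 fun u hadd hsub ↦
    eq_zero_of_forall_incidentSites hP hp hadd hsub fun q hq ↦ ?_
  rw [Finset.card_le_one.1 hv q hq p hp]

lemma finrank_lt_card_incidentSites [FiniteDimensional ℝ E] (hP : Convex ℝ P)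
    (hp : p ∈ incidentSites P S v) (hv : v ∈ interior P) :
    finrank ℝ E < (incidentSites P S v).card := by
  classical
  by_contra! hcard
  set D := ((incidentSites P S v).erase p).image (· - p)
  have hspan : Submodule.span ℝ (D : Set E) ≠ ⊤ := fun htop ↦ by
    have : finrank ℝ (Submodule.span ℝ (D : Set E)) ≤ _ :=
      (finrank_span_finset_le_card D).trans Finset.card_image_le
    rw [htop, finrank_top, Finset.card_erase_of_mem hp] at this
    have := Finset.card_pos.2 ⟨p, hp⟩
    lia
  obtain ⟨u, hu, hu0⟩ := Submodule.exists_mem_ne_zero_of_ne_bot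
    (mt (Submodule.orthogonal_eq_bot_iff).1 hspan)
  have hortho (q : E) (hq : q ∈ incidentSites P S v) : inner ℝ u q = inner ℝ u p := by
    obtain rfl | hqp := eq_or_ne q p
    · rfl
    · rw [← sub_eq_zero, ← inner_sub_right, real_inner_comm]
      exact hu _ (Submodule.subset_span (Finset.mem_image_of_mem _ (Finset.mem_erase.2 ⟨hqp, hq⟩)))
  have hnhds := mem_interior_iff_mem_nhds.1 hv
  obtain ⟨r, hr, hr', hr0⟩ := ((eventually_add_smul_mem hnhds u).and
    ((eventually_add_smul_mem hnhds (-u)).and self_mem_nhdsWithin)).exists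
  rw [smul_neg, ← sub_eq_add_neg] at hr'
  have := eq_zero_of_forall_incidentSites hP hp hr hr' fun q hq ↦ by
    rw [real_inner_smul_left, real_inner_smul_left, hortho q hq]
  exact (smul_ne_zero hr0.ne' hu0) this

lemma finite_extremePoints_voronoiCell [Fact (finrank ℝ E = 2)] (hP : Convex ℝ P)
    (hf : (P.extremePoints ℝ).Finite) : ((voronoiCell P S p).extremePoints ℝ).Finite := by
  classical
  induction S using Finset.induction_on with
  | empty => simpa [voronoiCell] using hf
  | insert q S _ ih =>
    rw [voronoiCell_insert]
    obtain rfl | hqp := eq_or_ne q p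
    · simpa using ih
    · simp_rw [real_inner_comm (q - p)]
      exact finite_extremePoints_inter_halfSpace (convex_voronoiCell hP) ih
        (f := innerSL ℝ (q - p)) (collinear_inner_eq (sub_ne_zero.2 hqp) _)

lemma exists_subset_interior_voronoiCell_nonempty [CompleteSpace E] (hc : IsCompact P)
    (hP : Convex ℝ P) (hint : (interior P).Nonempty) (hS : S.Nonempty) :
    ∃ G ⊆ S, G.Nonempty ∧ ∀ p ∈ G,
      voronoiCell P G p = voronoiCell P S p ∧ (interior (voronoiCell P G p)).Nonempty := by
  classical
  set G := {p ∈ S | (interior (voronoiCell P S p)).Nonempty}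
  have hclosed (p : E) : IsClosed (voronoiCell P S p) := (isCompact_voronoiCell hc).isClosed
  have hdense : Dense (⋂ p ∈ S \ G, (voronoiCell P S p)ᶜ) := by
    refine dense_biInter_of_isOpen (S := ((S \ G : Finset E) : Set E))
      (fun p _ ↦ (hclosed p).isOpen_compl) (Finset.countable_toSet _) fun p hp ↦ ?_
    rw [← interior_eq_empty_iff_dense_compl, ← Set.not_nonempty_iff_eq_empty]
    obtain ⟨hpS, hpG⟩ := Finset.mem_sdiff.1 hp
    exact fun hne ↦ hpG (Finset.mem_filter.2 ⟨hpS, hne⟩)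
  have hclosed' : IsClosed (⋃ p ∈ G, voronoiCell P S p) :=
    isClosed_biUnion_finset fun p _ ↦ hclosed p
  have hinterior : interior P ⊆ ⋃ p ∈ G, voronoiCell P S p := fun y hy ↦ by
    by_contra hyG
    obtain ⟨z, ⟨hzP, hzG⟩, hz⟩ := hdense.inter_open_nonempty _
      (isOpen_interior.inter hclosed'.isOpen_compl) ⟨y, hy, hyG⟩
    obtain ⟨p, hpS, hzp⟩ := exists_mem_voronoiCell hS (interior_subset hzP)
    by_cases hpG : p ∈ G
    · exact hzG (Set.mem_biUnion hpG hzp)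
    · exact Set.mem_iInter₂.1 hz p (Finset.mem_sdiff.2 ⟨hpS, hpG⟩) hzp
  have hcover : P ⊆ ⋃ p ∈ G, voronoiCell P S p := by
    refine subset_closure.trans ?_
    rw [← hP.closure_interior_eq_closure_of_nonempty_interior hint]
    exact closure_minimal hinterior hclosed'
  obtain ⟨x, hx⟩ := hint
  obtain ⟨p, hp, -⟩ := Set.mem_iUnion₂.1 (hinterior hx)
  refine ⟨G, Finset.filter_subset _ _, ⟨p, hp⟩, fun p hp ↦ ?_⟩
  have heq := voronoiCell_eq_of_subset (p := p) (Finset.filter_subset _ _) hcover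
  exact ⟨heq, heq ▸ (Finset.mem_filter.1 hp).2⟩

/-! ### Counting the vertices of the cells -/

/-- The extreme points of `K` at which the function `f` does not attain its maximum or minimum over
`K`. -/
def intermediateVertices (K : Set E) (f : E → ℝ) : Set E :=
  {v ∈ K.extremePoints ℝ | (∃ x ∈ K, f x < f v) ∧ ∃ y ∈ K, f v < f y}

lemma intermediateVertices_subset {K : Set E} {f : E → ℝ} :
    intermediateVertices K f ⊆ K.extremePoints ℝ :=
  fun _ hv ↦ hv.1

lemma ncard_extremePoints_le {K : Set E} {f : E → ℝ} (hf : (K.extremePoints ℝ).Finite)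
    (hinj : Set.InjOn f (K.extremePoints ℝ)) :
    (K.extremePoints ℝ).ncard ≤ (intermediateVertices K f).ncard + 2 := by
  obtain hempty | hne := (K.extremePoints ℝ).eq_empty_or_nonempty
  · simp [hempty]
  obtain ⟨t, ht, hmax⟩ := Set.exists_max_image _ f hf hne
  obtain ⟨b, hb, hmin⟩ := Set.exists_min_image _ f hf hne
  have hsub : K.extremePoints ℝ ⊆ insert t (insert b (intermediateVertices K f)) := fun v hv ↦ by
    by_contra! hvtb
    simp only [Set.mem_insert_iff, not_or] at hvtb
    obtain ⟨hvt, hvb, hmid⟩ := hvtb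
    exact hmid ⟨hv, ⟨b, hb.1, (hmin v hv).lt_of_ne fun h ↦ hvb (hinj hv hb h.symm)⟩,
      t, ht.1, (hmax v hv).lt_of_ne fun h ↦ hvt (hinj hv ht h)⟩
  have hfin : (intermediateVertices K f).Finite := hf.subset intermediateVertices_subset
  calc (K.extremePoints ℝ).ncard
      ≤ (insert t (insert b (intermediateVertices K f))).ncard :=
        Set.ncard_le_ncard hsub ((hfin.insert b).insert t)
    _ ≤ (intermediateVertices K f).ncard + 2 :=
        (Set.ncard_insert_le _ _).trans (Nat.succ_le_succ (Set.ncard_insert_le _ _))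

lemma exists_injOn_inner [Nontrivial E] {V : Set E} (hV : V.Finite) :
    ∃ w : E, w ≠ 0 ∧ Set.InjOn (fun x ↦ inner ℝ w x) V := by
  obtain ⟨y, hy⟩ := exists_ne (0 : E)
  set D : Set E := insert y ((fun x : E × E ↦ x.1 - x.2) '' V ×ˢ V) \ {0}
  have : Finite D := (((hV.prod hV).image _).insert y).sdiff.to_subtype
  obtain ⟨w, hw⟩ := Module.Dual.exists_forall_ne_zero_of_forall_exists
    (fun d : D ↦ innerₗ E d.1) fun d ↦ ⟨d, inner_self_ne_zero.2 d.2.2⟩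
  refine ⟨w, ?_, fun a ha b hb hab ↦ ?_⟩
  · rintro rfl
    exact hw ⟨y, Set.mem_insert _ _, hy⟩ (map_zero _)
  · by_contra hne
    refine hw ⟨a - b, .inr ⟨(a, b), ⟨ha, hb⟩, rfl⟩, sub_ne_zero.2 hne⟩ ?_
    rw [innerₗ_apply_apply, real_inner_comm, inner_sub_right, sub_eq_zero]
    exact hab

section Level

variable {K : Set E} {w e : E}

lemma exists_add_smul_mem_interior (he : ∀ x, inner ℝ w x = 0 → ∃ r : ℝ, r • e = x)
    (hK : Convex ℝ K) (hint : (interior K).Nonempty)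
    (hv : v ∈ intermediateVertices K (inner ℝ w)) :
    ∃ r : ℝ, r ≠ 0 ∧ v + r • e ∈ interior K := by
  obtain ⟨hext, ⟨x, hx, hxv⟩, y, hy, hvy⟩ := hv
  have hcont : Continuous fun z ↦ inner ℝ w z := by fun_prop
  have hclosure : K ⊆ closure (interior K) :=
    subset_closure.trans_eq (hK.closure_interior_eq_closure_of_nonempty_interior hint).symm
  obtain ⟨a, hav, ha⟩ := mem_closure_iff.1 (hclosure hx) _ (isOpen_lt hcont continuous_const) hxv
  obtain ⟨b, hvb, hb⟩ := mem_closure_iff.1 (hclosure hy) _ (isOpen_lt continuous_const hcont) hvy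
  obtain ⟨z, hz, hzv⟩ := hK.interior.isPreconnected.intermediate_value ha hb hcont.continuousOn
    ⟨le_of_lt hav, le_of_lt hvb⟩
  obtain ⟨r, hr⟩ := he (z - v) ((inner_sub_right w z v).trans (sub_eq_zero.2 hzv))
  have hz' : v + r • e = z := by rw [hr, add_sub_cancel]
  refine ⟨r, ?_, hz' ▸ hz⟩
  rintro rfl
  rw [zero_smul, add_zero] at hz'
  have : Nontrivial E := ⟨x, y, fun hxy ↦ (hxv.trans hvy).ne (hxy ▸ rfl)⟩
  exact Set.disjoint_left.1 (disjoint_interior_extremePoints K) (hz' ▸ hz) hext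

lemma eq_of_add_smul_mem_interior (hP : Convex ℝ P) (hp : p ∈ S) (hq : q ∈ S)
    (hvp : v ∈ voronoiCell P S p) (hvq : v ∈ voronoiCell P S q) {r s : ℝ}
    (hr : v + r • e ∈ interior (voronoiCell P S p))
    (hs : v + s • e ∈ interior (voronoiCell P S q)) (hrs : 0 < r / s) : p = q := by
  wlog hle : r / s ≤ 1 generalizing p q r s
  · refine (this hq hp hvq hvp hs hr ?_ ?_).symm
    · rw [← inv_div]
      positivity
    · rw [← inv_div]
      exact inv_le_one_of_one_le₀ (le_of_not_ge hle)
  by_contra hpq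
  have hs0 : s ≠ 0 := by
    rintro rfl
    simp at hrs
  have hmem := (convex_voronoiCell hP).add_smul_mem_interior hvq hs ⟨hrs, hle⟩
  rw [smul_smul, div_mul_cancel₀ r hs0] at hmem
  exact Set.disjoint_left.1 (disjoint_interior_voronoiCell hp hq hpq) hr (interior_subset hmem)

lemma mem_of_add_smul_mem (hK : Convex ℝ K) {r s : ℝ} (hr : v + r • e ∈ K)
    (hs : v + s • e ∈ K) (hrs : r / s < 0) : v ∈ K := by
  have hT : Convex ℝ (AffineMap.lineMap (k := ℝ) v (v + e) ⁻¹' K) := hK.affine_preimage _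
  have hmem {t : ℝ} : t ∈ AffineMap.lineMap (k := ℝ) v (v + e) ⁻¹' K ↔ v + t • e ∈ K := by
    rw [Set.mem_preimage, AffineMap.lineMap_apply, vsub_eq_sub, add_sub_cancel_left, vadd_eq_add,
      add_comm]
  have h0 : (0 : ℝ) ∈ Set.uIcc r s := Set.mem_uIcc.2 <| (div_neg_iff.1 hrs).symm.imp
    (fun h ↦ ⟨h.1.le, h.2.le⟩) fun h ↦ ⟨h.2.le, h.1.le⟩
  simpa using hmem.1 (hT.ordConnected.uIcc_subset (hmem.2 hr) (hmem.2 hs) h0)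

open scoped Classical in
/-- The sites for which `v` is an intermediate vertex of the cell with respect to the height
function `inner ℝ w`. -/
def intermediateSites (P : Set E) (S : Finset E) (w v : E) : Finset E :=
  {p ∈ S | v ∈ intermediateVertices (voronoiCell P S p) (inner ℝ w)}

lemma mem_intermediateSites : p ∈ intermediateSites P S w v ↔
    p ∈ S ∧ v ∈ intermediateVertices (voronoiCell P S p) (inner ℝ w) := by
  classical exact Finset.mem_filter

variable [Fact (finrank ℝ E = 2)]

lemma exists_forall_intermediateSites (hw : w ≠ 0) (hP : Convex ℝ P)
    (hint : ∀ p ∈ S, (interior (voronoiCell P S p)).Nonempty) (v : E) :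
    ∃ (e : E) (r : E → ℝ), (∀ p ∈ intermediateSites P S w v, r p ≠ 0 ∧
      v + r p • e ∈ interior (voronoiCell P S p)) ∧
      ∀ p ∈ intermediateSites P S w v, ∀ q ∈ intermediateSites P S w v, 0 < r p / r q → p = q := by
  obtain ⟨e, he⟩ := exists_forall_inner_eq_zero hw
  choose! r hr0 hr using fun p (hp : p ∈ intermediateSites P S w v) ↦
    exists_add_smul_mem_interior he (convex_voronoiCell hP) (hint p (mem_intermediateSites.1 hp).1)
      (mem_intermediateSites.1 hp).2
  refine ⟨e, r, fun p hp ↦ ⟨hr0 p hp, hr p hp⟩, fun p hp q hq hpq ↦ ?_⟩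
  obtain ⟨hpS, hvp⟩ := mem_intermediateSites.1 hp
  obtain ⟨hqS, hvq⟩ := mem_intermediateSites.1 hq
  exact eq_of_add_smul_mem_interior hP hpS hqS hvp.1.1 hvq.1.1 (hr p hp) (hr q hq) hpq

lemma card_intermediateSites_le_two (hw : w ≠ 0) (hP : Convex ℝ P)
    (hint : ∀ p ∈ S, (interior (voronoiCell P S p)).Nonempty) :
    (intermediateSites P S w v).card ≤ 2 := by
  obtain ⟨e, r, hr, heq⟩ := exists_forall_intermediateSites hw hP hint v
  refine Finset.card_le_card_of_injOn (t := (Finset.univ : Finset Bool)) (fun p ↦ decide (0 < r p))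
    (fun _ _ ↦ Finset.mem_univ _) fun p hp q hq hpq ↦ heq p hp q hq ?_
  rcases (hr p hp).1.lt_or_gt with h | h <;> rcases (hr q hq).1.lt_or_gt with h' | h'
  · exact div_pos_of_neg_of_neg h h'
  · simp [h.not_gt, h'] at hpq
  · simp [h, h'.not_gt] at hpq
  · exact div_pos h h'

lemma card_intermediateSites_le_one (hw : w ≠ 0) (hP : Convex ℝ P)
    (hint : ∀ p ∈ S, (interior (voronoiCell P S p)).Nonempty) (hv : v ∉ interior P) :
    (intermediateSites P S w v).card ≤ 1 := by
  obtain ⟨e, r, hr, heq⟩ := exists_forall_intermediateSites hw hP hint v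
  refine Finset.card_le_one.2 fun p hp q hq ↦ heq p hp q hq ?_
  by_contra! hneg
  have hmem {p : E} (hp : p ∈ intermediateSites P S w v) : v + r p • e ∈ interior P :=
    interior_mono voronoiCell_subset (hr p hp).2
  exact hv (mem_of_add_smul_mem hP.interior (hmem hp) (hmem hq)
    (hneg.lt_of_ne (div_ne_zero (hr p hp).1 (hr q hq).1)))

end Level

section Counting

variable {w : E} {Z V : Finset E}

lemma intermediateSites_eq_empty_of_forall_le (hv : ∀ x ∈ P, inner ℝ w x ≤ inner ℝ w v) :
    intermediateSites P S w v = ∅ := by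
  refine Finset.eq_empty_of_forall_notMem fun p hp ↦ ?_
  obtain ⟨-, -, -, y, hy, hvy⟩ := mem_intermediateSites.1 hp
  exact (hv y (voronoiCell_subset hy)).not_gt hvy

lemma intermediateSites_eq_empty_of_forall_ge (hv : ∀ x ∈ P, inner ℝ w v ≤ inner ℝ w x) :
    intermediateSites P S w v = ∅ := by
  refine Finset.eq_empty_of_forall_notMem fun p hp ↦ ?_
  obtain ⟨-, -, ⟨x, hx, hxv⟩, -⟩ := mem_intermediateSites.1 hp
  exact (hv x (voronoiCell_subset hx)).not_gt hxv

lemma exists_card_eq_two_forall_intermediateSites_eq_empty (hc : IsCompact P)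
    (hint : (interior P).Nonempty) (hw : w ≠ 0) (S : Finset E) : ∃ Z : Finset E, Z.card = 2 ∧
      ∀ v ∈ Z, v ∈ P.extremePoints ℝ ∧ intermediateSites P S w v = ∅ := by
  classical
  have hne := hint.mono interior_subset
  obtain ⟨t, ht, htop⟩ := exists_mem_extremePoints_forall_le hc hne (innerSL ℝ w)
  obtain ⟨b, hb, hbot⟩ := exists_mem_extremePoints_forall_le hc hne (innerSL ℝ (-w))
  simp only [innerSL_apply_apply, inner_neg_left, neg_le_neg_iff] at htop hbot
  have htb : t ≠ b := by
    rintro rfl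
    obtain ⟨x, hx⟩ := hint
    obtain ⟨r, hr, hr0⟩ := ((eventually_add_smul_mem (mem_interior_iff_mem_nhds.1 hx) w).and
      self_mem_nhdsWithin).exists
    have hle := (htop _ hr).trans (hbot x (interior_subset hx))
    rw [inner_add_right, real_inner_smul_right, add_le_iff_nonpos_right] at hle
    exact hle.not_gt (mul_pos hr0 (real_inner_self_pos.2 hw))
  refine ⟨{t, b}, Finset.card_pair htb, fun v hv ↦ ?_⟩
  obtain rfl | rfl := by simpa using hv
  · exact ⟨ht, intermediateSites_eq_empty_of_forall_le htop⟩
  · exact ⟨hb, intermediateSites_eq_empty_of_forall_ge hbot⟩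

variable [Fact (finrank ℝ E = 2)]

open scoped Classical in
lemma three_mul_card_intermediateSites_add_le (hw : w ≠ 0) (hP : Convex ℝ P)
    (hint : ∀ p ∈ S, (interior (voronoiCell P S p)).Nonempty)
    (hZ : ∀ v ∈ Z, v ∈ P.extremePoints ℝ ∧ intermediateSites P S w v = ∅)
    (hv : (incidentSites P S v).Nonempty) :
    3 * (intermediateSites P S w v).card + (if v ∈ Z then 3 else 0) ≤
      2 * (incidentSites P S v).card + if v ∈ P.extremePoints ℝ then 1 else 0 := by
  have : FiniteDimensional ℝ E := .of_fact_finrank_eq_two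
  have : Nontrivial E := ⟨w, 0, hw⟩
  have hpos := hv.card_pos
  obtain ⟨p, hp⟩ := hv
  by_cases hvZ : v ∈ Z
  · rw [(hZ v hvZ).2, Finset.card_empty, if_pos hvZ, if_pos (hZ v hvZ).1]
    lia
  rw [if_neg hvZ]
  by_cases hvint : v ∈ interior P
  · have hdeg := finrank_lt_card_incidentSites hP hp hvint
    have hmid := card_intermediateSites_le_two (v := v) hw hP hint
    rw [‹Fact (finrank ℝ E = 2)›.out] at hdeg
    lia
  · have hmid := card_intermediateSites_le_one hw hP hint hvint
    split_ifs with hext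
    · lia
    · have hdeg := one_lt_card_incidentSites hP hp hext
      lia

lemma sum_ncard_eq_sum_card_filter {ι α : Type*} {s : Finset ι} {t : Finset α} {A : ι → Set α}
    [∀ i a, Decidable (a ∈ A i)] (h : ∀ i ∈ s, A i ⊆ t) :
    ∑ i ∈ s, (A i).ncard = ∑ a ∈ t, {i ∈ s | a ∈ A i}.card := by
  refine Eq.trans (Finset.sum_congr rfl fun i hi ↦ ?_)
    (Finset.sum_card_bipartiteAbove_eq_sum_card_bipartiteBelow fun i a ↦ a ∈ A i)
  rw [← Set.ncard_coe_finset]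
  congr 1
  ext a
  simpa [Finset.bipartiteAbove] using fun ha ↦ h i hi ha

lemma three_mul_sum_ncard_intermediateVertices_add_le (hw : w ≠ 0) (hP : Convex ℝ P)
    (hf : (P.extremePoints ℝ).Finite) (hint : ∀ p ∈ S, (interior (voronoiCell P S p)).Nonempty)
    (hZ : ∀ v ∈ Z, v ∈ P.extremePoints ℝ ∧ intermediateSites P S w v = ∅) (hZV : Z ⊆ V)
    (hV : ∀ v ∈ V, (incidentSites P S v).Nonempty)
    (hext : ∀ p ∈ S, (voronoiCell P S p).extremePoints ℝ ⊆ V) :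
    3 * ∑ p ∈ S, (intermediateVertices (voronoiCell P S p) (inner ℝ w)).ncard + 3 * Z.card ≤
      2 * ∑ p ∈ S, ((voronoiCell P S p).extremePoints ℝ).ncard + (P.extremePoints ℝ).ncard := by
  classical
  have hsum := Finset.sum_le_sum fun v hv ↦
    three_mul_card_intermediateSites_add_le hw hP hint hZ (hV v hv)
  rw [Finset.sum_add_distrib, Finset.sum_add_distrib, ← Finset.mul_sum, ← Finset.mul_sum,
    ← Finset.sum_filter, ← Finset.sum_filter, Finset.sum_const, Finset.sum_const,
    Finset.filter_mem_eq_inter, Finset.inter_eq_right.2 hZV, smul_eq_mul, smul_eq_mul,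
    mul_one] at hsum
  have hcard : {v ∈ V | v ∈ P.extremePoints ℝ}.card ≤ (P.extremePoints ℝ).ncard := by
    rw [← Set.ncard_coe_finset]
    exact Set.ncard_le_ncard (fun v hv ↦ (Finset.mem_filter.1 hv).2) hf
  rw [sum_ncard_eq_sum_card_filter hext,
    sum_ncard_eq_sum_card_filter fun p hp ↦ intermediateVertices_subset.trans (hext p hp)]
  unfold intermediateSites incidentSites at hsum
  lia

theorem sum_ncard_extremePoints_voronoiCell_add_six_le (hc : IsCompact P) (hP : Convex ℝ P)
    (hf : (P.extremePoints ℝ).Finite) (hS : S.Nonempty)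
    (hint : ∀ p ∈ S, (interior (voronoiCell P S p)).Nonempty) :
    ∑ p ∈ S, ((voronoiCell P S p).extremePoints ℝ).ncard + 6 ≤
      6 * S.card + (P.extremePoints ℝ).ncard := by
  classical
  have : Nontrivial E := nontrivial_of_finrank_pos (R := ℝ)
    (‹Fact (finrank ℝ E = 2)›.out.symm ▸ two_pos)
  have hfin (p : E) : ((voronoiCell P S p).extremePoints ℝ).Finite :=
    finite_extremePoints_voronoiCell hP hf
  set V := S.biUnion fun p ↦ (hfin p).toFinset with hVdef
  have hV {v : E} : v ∈ V ↔ ∃ p ∈ S, v ∈ (voronoiCell P S p).extremePoints ℝ := by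
    simp [hVdef]
  obtain ⟨w, hw, hinj⟩ := exists_injOn_inner V.finite_toSet
  have hPint : (interior P).Nonempty :=
    have ⟨p, hp⟩ := hS
    (hint p hp).mono (interior_mono voronoiCell_subset)
  obtain ⟨Z, hcard, hZ⟩ := exists_card_eq_two_forall_intermediateSites_eq_empty hc hPint hw S
  have hZV : Z ⊆ V := fun v hv ↦ by
    obtain ⟨p, hp, hvp⟩ := exists_mem_voronoiCell hS (hZ v hv).1.1
    exact hV.2 ⟨p, hp, inter_extremePoints_subset_extremePoints_of_subset voronoiCell_subset
      ⟨hvp, (hZ v hv).1⟩⟩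
  have hmid := three_mul_sum_ncard_intermediateVertices_add_le hw hP hf hint hZ hZV
    (fun v hv ↦ have ⟨p, hp, hvp⟩ := hV.1 hv; ⟨p, mem_incidentSites.2 ⟨hp, hvp⟩⟩)
    fun p hp v hv ↦ hV.2 ⟨p, hp, hv⟩
  have hcell := Finset.sum_le_sum fun p (hp : p ∈ S) ↦ ncard_extremePoints_le (hfin p)
    (hinj.mono fun v hv ↦ hV.2 ⟨p, hp, hv⟩)
  rw [Finset.sum_add_distrib, Finset.sum_const, smul_eq_mul] at hcell
  lia

end Counting

end Voronoi

/-! ### Assembling the cells -/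

section Assembly

open Pointwise

lemma inner_sub_normalize_le {E : Type*} [NormedAddCommGroup E] [InnerProductSpace ℝ E]
    {p q x : E} (hqp : q ≠ p) (hpq : dist q p ≤ 1) (hx : dist x p ≤ dist x q) :
    inner ℝ (x - p) (NormedSpace.normalize (q - p)) ≤ 1 / 2 := by
  have hpos : 0 < ‖q - p‖ := norm_pos_iff.2 (sub_ne_zero.2 hqp)
  have hinner : inner ℝ (x - p) (q - p) ≤ ‖q - p‖ ^ 2 / 2 := by
    have := dist_le_dist_iff_inner_sub_le.1 hx
    rw [norm_sub_sq_real, inner_sub_left, inner_sub_right p, real_inner_self_eq_norm_sq]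
    linarith [real_inner_comm p q]
  calc inner ℝ (x - p) (NormedSpace.normalize (q - p))
      = ‖q - p‖⁻¹ * inner ℝ (x - p) (q - p) := real_inner_smul_right ..
    _ ≤ ‖q - p‖⁻¹ * (‖q - p‖ ^ 2 / 2) := by gcongr
    _ = ‖q - p‖ / 2 := by field_simp
    _ ≤ 1 / 2 := by linarith [dist_eq_norm q p]

lemma inner_normalize_normalize_le {E : Type*} [NormedAddCommGroup E] [InnerProductSpace ℝ E]
    {u v : E} (h : 2 * π / 3 ≤ InnerProductGeometry.angle u v) :
    inner ℝ (NormedSpace.normalize u) (NormedSpace.normalize v) ≤ -(1 / 2) := by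
  have hcos := cos_le_cos_of_nonneg_of_le_pi (by positivity)
    (InnerProductGeometry.angle_le_pi u v) h
  rw [InnerProductGeometry.cos_angle, cos_two_pi_div_three] at hcos
  calc inner ℝ (NormedSpace.normalize u) (NormedSpace.normalize v)
      = inner ℝ u v / (‖u‖ * ‖v‖) := by
        simp only [NormedSpace.normalize, real_inner_smul_left, real_inner_smul_right]
        field_simp
    _ ≤ -(1 / 2) := hcos

lemma ne_of_le_angle {p q q' : Pt} (h : 2 * π / 3 ≤ EuclideanGeometry.angle q p q') : q ≠ p := by
  rintro rfl
  rw [EuclideanGeometry.angle_self_left] at h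
  linarith [pi_pos]

variable {P : Set Pt} {S B : Finset Pt} {p q q' : Pt}

lemma measureReal_le_of_angle (hc : IsCompact P) (hP : Convex ℝ P)
    (hf : (P.extremePoints ℝ).Finite) (hdisk : P ⊆ closedBall p 1) (hqp : dist q p ≤ 1)
    (hqp' : dist q' p ≤ 1) (hangle : 2 * π / 3 ≤ EuclideanGeometry.angle q p q')
    (hcut : ∀ x ∈ P, dist x p ≤ dist x q ∧ dist x p ≤ dist x q') :
    volume.real P ≤ tangentIntercept * (P.extremePoints ℝ).ncard +
      (tangentSlope * (2 * π) - 2 * chordGain) := by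
  have hq : q ≠ p := ne_of_le_angle hangle
  have hq' : q' ≠ p := ne_of_le_angle (EuclideanGeometry.angle_comm q p q' ▸ hangle)
  have hnorm {r : Pt} (hr : r ≠ p) : ‖NormedSpace.normalize (r - p)‖ = 1 :=
    NormedSpace.norm_normalize_eq_one_iff.2 (sub_ne_zero.2 hr)
  have hcard : ((-p +ᵥ P).extremePoints ℝ).ncard = (P.extremePoints ℝ).ncard := by
    rw [extremePoints_vadd]
    exact Set.ncard_image_of_injective _ (AddAction.injective (-p))
  have hvol : volume.real (-p +ᵥ P) = volume.real P := by
    rw [measureReal_def, measure_vadd, measureReal_def]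
  rw [← hvol, ← hcard]
  refine measureReal_le_of_inner_le (hc.vadd _) (hP.vadd _) ?_ ?_ (hnorm hq) (hnorm hq')
    (inner_normalize_normalize_le hangle) ?_
  · rw [extremePoints_vadd]
    exact hf.image _
  · rintro _ ⟨x, hx, rfl⟩
    simpa [dist_eq_norm, neg_add_eq_sub] using hdisk hx
  · rintro _ ⟨x, hx, rfl⟩
    simp only [vadd_eq_add, neg_add_eq_sub]
    exact ⟨inner_sub_normalize_le hq hqp (hcut x hx).1,
      inner_sub_normalize_le hq' hqp' (hcut x hx).2⟩

instance fact_finrank_pt : Fact (Module.finrank ℝ Pt = 2) := ⟨finrank_euclideanSpace_fin⟩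

/-- The site `p` sees two sites of `S` at distance at most `1` under an angle of at least `2π/3`:
what the interior terms of a sequence of centers satisfy, without reference to their order. -/
def HasWideTurn (S : Finset Pt) (p : Pt) : Prop :=
  ∃ q ∈ S, ∃ q' ∈ S, dist q p ≤ 1 ∧ dist q' p ≤ 1 ∧ 2 * π / 3 ≤ EuclideanGeometry.angle q p q'

lemma measureReal_voronoiCell_le (hc : IsCompact P) (hP : Convex ℝ P)
    (hf : (P.extremePoints ℝ).Finite) (hcover : P ⊆ ⋃ q ∈ S, closedBall q 1)
    (hturn : p ∉ B → HasWideTurn S p) : volume.real (voronoiCell P S p) ≤ 1 + √3 / 2 +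
      tangentIntercept * (((voronoiCell P S p).extremePoints ℝ).ncard - 6) +
      Set.indicator B (fun _ ↦ π) p := by
  have hdisk : voronoiCell P S p ⊆ closedBall p 1 := voronoiCell_subset_closedBall hcover
  by_cases hB : p ∈ B
  · rw [Set.indicator_of_mem (Finset.mem_coe.2 hB)]
    have := mul_nonneg tangentIntercept_nonneg
      (Nat.cast_nonneg ((voronoiCell P S p).extremePoints ℝ).ncard)
    linarith [measureReal_le_pi hdisk, tangentIntercept_mem_Ioo.2, sqrt_nonneg 3]
  · rw [Set.indicator_of_notMem (Finset.mem_coe.not.2 hB), add_zero]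
    obtain ⟨q, hq, q', hq', hqp, hqp', hangle⟩ := hturn hB
    linarith [measureReal_le_of_angle (isCompact_voronoiCell hc) (convex_voronoiCell hP)
      (finite_extremePoints_voronoiCell hP hf) hdisk hqp hqp' hangle
      fun x hx ↦ ⟨hx.2 q hq, hx.2 q' hq'⟩, six_mul_tangentIntercept_add]

lemma measureReal_le_of_covering (hc : IsCompact P) (hP : Convex ℝ P)
    (hf : (P.extremePoints ℝ).Finite) (hint : (interior P).Nonempty)
    (hcover : P ⊆ ⋃ p ∈ S, closedBall p 1) (hturn : ∀ p ∈ S, p ∉ B → HasWideTurn S p) :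
    volume.real P ≤ S.card * (1 + √3 / 2) + B.card * π +
      tangentIntercept * ((P.extremePoints ℝ).ncard - 6) := by
  classical
  obtain ⟨x, hx⟩ := hint
  obtain ⟨s, hs, -⟩ := Set.mem_iUnion₂.1 (hcover (interior_subset hx))
  obtain ⟨G, hGS, hG, hcell⟩ := exists_subset_interior_voronoiCell_nonempty hc hP ⟨x, hx⟩ ⟨s, hs⟩
  have hcount : (∑ p ∈ G, ((voronoiCell P G p).extremePoints ℝ).ncard : ℝ) + 6 ≤
      6 * G.card + (P.extremePoints ℝ).ncard := by
    exact_mod_cast sum_ncard_extremePoints_voronoiCell_add_six_le hc hP hf hG fun p hp ↦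
      (hcell p hp).2
  have hbound : ∀ p ∈ G, volume.real (voronoiCell P G p) ≤ 1 + √3 / 2 + tangentIntercept *
      (((voronoiCell P G p).extremePoints ℝ).ncard - 6) + Set.indicator B (fun _ ↦ π) p :=
    fun p hp ↦ (hcell p hp).1 ▸ measureReal_voronoiCell_le hc hP hf hcover (hturn p (hGS hp))
  have hB : ∑ p ∈ G, Set.indicator B (fun _ ↦ π) p ≤ B.card * π := by
    rw [Finset.sum_indicator_eq_sum_inter, Finset.sum_const, nsmul_eq_mul]
    gcongr
    exact Finset.inter_subset_right
  calc volume.real P ≤ ∑ p ∈ G, volume.real (voronoiCell P G p) :=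
        measureReal_le_sum_voronoiCell hG hc.measure_ne_top
    _ ≤ ∑ p ∈ G, (1 + √3 / 2 + tangentIntercept *
          (((voronoiCell P G p).extremePoints ℝ).ncard - 6) + Set.indicator B (fun _ ↦ π) p) :=
        Finset.sum_le_sum hbound
    _ = G.card * (1 + √3 / 2) + ∑ p ∈ G, Set.indicator B (fun _ ↦ π) p + tangentIntercept *
          (∑ p ∈ G, (((voronoiCell P G p).extremePoints ℝ).ncard : ℝ) - 6 * G.card) := by
        simp only [Finset.sum_add_distrib, ← Finset.mul_sum, Finset.sum_sub_distrib,
          Finset.sum_const, nsmul_eq_mul]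
        ring
    _ ≤ S.card * (1 + √3 / 2) + B.card * π +
          tangentIntercept * ((P.extremePoints ℝ).ncard - 6) := by
        have hcard : (G.card : ℝ) ≤ S.card := mod_cast Finset.card_le_card hGS
        have hextra := mul_le_mul_of_nonneg_left (sub_le_sub_right (le_sub_iff_add_le.2 hcount)
          (6 * G.card : ℝ)) tangentIntercept_nonneg
        refine add_le_add (add_le_add (by gcongr) hB) (hextra.trans_eq ?_)
        ring

end Assembly

theorem area_hexagon_le_of_seq_covering_general {P : Set Pt} (hc : IsCompact P)
    (hP : Convex ℝ P) (hf : (P.extremePoints ℝ).Finite) {N : ℕ} (C : Fin N → Pt)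
    (hcover : P ⊆ ⋃ i, closedBall (C i) 1)
    (hdist : ∀ i j : Fin N, (i : ℕ) + 1 = j → dist (C j) (C i) ≤ 1)
    (hangle : ∀ i j k : Fin N, (i : ℕ) + 1 = j → (j : ℕ) + 1 = k →
      2 * π / 3 ≤ EuclideanGeometry.angle (C i) (C j) (C k)) :
    volume.real P ≤ N * (1 + √3 / 2) + 2 * π +
      tangentIntercept * ((P.extremePoints ℝ).ncard - 6) := by
  classical
  obtain hint | hint := (interior P).eq_empty_or_nonempty
  · have hzero : volume.real P = 0 := by
      have := hP.addHaar_frontier volume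
      rw [hc.isClosed.frontier_eq, hint, Set.sdiff_empty] at this
      rw [measureReal_def, this, ENNReal.toReal_zero]
    have hN : 0 ≤ N * (1 + √3 / 2) := by positivity
    have hcard := mul_nonneg tangentIntercept_nonneg (Nat.cast_nonneg (P.extremePoints ℝ).ncard)
    linarith [pi_gt_three, tangentIntercept_mem_Ioo.2]
  obtain _ | n := N
  · obtain ⟨x, hx⟩ := hint
    simpa using hcover (interior_subset hx)
  have hmem (i : Fin (n + 1)) : C i ∈ Finset.univ.image C := Finset.mem_image_of_mem C (by simp)
  have hmain := measureReal_le_of_covering (S := Finset.univ.image C) (B := {C 0, C (Fin.last n)})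
    hc hP hf hint (by simpa using hcover) fun p hp hpB ↦ by
      obtain ⟨⟨i, hi⟩, -, rfl⟩ := Finset.mem_image.1 hp
      have hne : i ≠ 0 ∧ i ≠ n := by
        constructor <;> rintro rfl <;> simp [Fin.last] at hpB
      obtain ⟨j, rfl⟩ := Nat.exists_eq_succ_of_ne_zero hne.1
      exact ⟨_, hmem ⟨j, by omega⟩, _, hmem ⟨j + 2, by omega⟩,
        (dist_comm _ _).trans_le (hdist _ _ rfl), hdist _ _ rfl, hangle _ _ _ rfl rfl⟩
  have hcard : ((Finset.univ.image C).card : ℝ) ≤ (n + 1 : ℕ) := by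
    exact_mod_cast Finset.card_image_le.trans_eq (Finset.card_fin _)
  have htwo : (({C 0, C (Fin.last n)} : Finset Pt).card : ℝ) ≤ 2 := by
    exact_mod_cast Finset.card_le_two
  refine hmain.trans ?_
  gcongr

/-- If a convex hexagon `Π` is covered by a finite sequence of `N` unit disks, each disk
containing the center of the next and with no turn sharper than `2π/3`, then
`volume(Π) ≤ N·(1 + √3/2) + 2π`. -/
theorem area_hexagon_le_of_seq_covering (Hex : Set Pt) (hHex : IsConvexHexagon Hex)
    (N : ℕ) (hN : 1 ≤ N) (C : Fin N → Pt)
    (hcover : Hex ⊆ ⋃ i, closedBall (C i) 1)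
    (hdist : ∀ i : ℕ, (h : i + 1 < N) →
      0 < dist (C ⟨i + 1, h⟩) (C ⟨i, by omega⟩) ∧
        dist (C ⟨i + 1, h⟩) (C ⟨i, by omega⟩) ≤ 1)
    (hangle : ∀ i : ℕ, (h1 : 1 ≤ i) → (h2 : i ≤ N - 2) →
      2 * π / 3 ≤ EuclideanGeometry.angle
        (C ⟨i - 1, by omega⟩) (C ⟨i, by omega⟩) (C ⟨i + 1, by omega⟩)) :
    volume Hex ≤ ENNReal.ofReal ((N : ℝ) * (1 + Real.sqrt 3 / 2) + 2 * π) := by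
  obtain ⟨hc, hP, -, hcard⟩ := hHex
  have hf : (Hex.extremePoints ℝ).Finite := Set.finite_of_ncard_ne_zero (by omega)
  have hreal := area_hexagon_le_of_seq_covering_general hc hP hf C hcover
    (by
      rintro ⟨i, -⟩ ⟨_, hj⟩ rfl
      exact (hdist i hj).2)
    (by
      rintro ⟨i, -⟩ ⟨_, -⟩ ⟨_, hk⟩ rfl rfl
      exact hangle (i + 1) (by omega) (Nat.le_sub_of_add_le hk))
  rw [hcard, Nat.cast_ofNat, sub_self, mul_zero, add_zero] at hreal
  rwa [← ENNReal.ofReal_toReal hc.measure_lt_top.ne, ENNReal.ofReal_le_ofReal_iff (by positivity)]
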